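/- arXiv:2506.01030 — 2 statements merged into one kernel-verified Lean document; each statement's English description precedes it below -/
import Mathlib

section
/- Under Condition (★), for every integer h ≥ 2, ∑_{p : N(p) ≤ x} ∑_{k=1}^{h−1} (N(p)^h − N(p)^{h−1})/(N(p)^k·(N(p)^h − 1)) = log log x + ℭ₁ + O_h(1/log x) as x → ∞, where the implied constant depends only on h and the data P, N, κ, θ. -/
open Filter Topology Asymptotics
open scoped Classical

noncomputable section

/-- The norm on the free abelian monoid `P →₀ ℕ`, extended multiplicatively
from the norm `N` on the prime elements. -/
def Nm {P : Type*} (N : P → ℕ) (m : P →₀ ℕ) : ℕ :=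
  m.prod fun p k => N p ^ k

/-- The number of distinct prime elements generating `m`. -/
def omegaM {P : Type*} (m : P →₀ ℕ) : ℕ := m.support.card

/-- `m` is `h`-free: every multiplicity is at most `h - 1`. -/
def HFree {P : Type*} (h : ℕ) (m : P →₀ ℕ) : Prop := ∀ p, m p ≤ h - 1

/-- `m` is `h`-full: every nonzero multiplicity is at least `h`. -/
def HFull {P : Type*} (h : ℕ) (m : P →₀ ℕ) : Prop := ∀ p, m p = 0 ∨ h ≤ m p

/-- Condition (★): `#{m : N(m) ≤ x} = κ·x + O(x^θ)` with `κ > 0`, `0 ≤ θ < 1`. -/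
def StarCond {P : Type*} (N : P → ℕ) (κ θ : ℝ) : Prop :=
  0 < κ ∧ 0 ≤ θ ∧ θ < 1 ∧
    (fun x : ℝ => (({m : P →₀ ℕ | (Nm N m : ℝ) ≤ x}.ncard : ℝ) - κ * x))
      =O[atTop] fun x : ℝ => x ^ θ

/-- The generalized zeta function `ζ_M(s) = ∑_m N(m)^{-s}`. -/
def zetaM {P : Type*} (N : P → ℕ) (s : ℝ) : ℝ :=
  ∑' m : P →₀ ℕ, 1 / (Nm N m : ℝ) ^ s

/-- The constant `γ_h`. -/
def gammah {P : Type*} (N : P → ℕ) (h : ℕ) : ℝ :=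
  ∏' p : P, (1 + ((N p : ℝ) - (N p : ℝ) ^ (1 / (h : ℝ))) /
    ((N p : ℝ) ^ 2 * ((N p : ℝ) ^ (1 / (h : ℝ)) - 1)))

/-- `A` is the Mertens constant `𝔄` of the prime system:
`𝔄 = lim (∑_{N(p) ≤ x} 1/N(p) − log log x)`. -/
def IsMertens {P : Type*} (N : P → ℕ) (A : ℝ) : Prop :=
  Tendsto (fun x : ℝ =>
      (∑ᶠ p ∈ {p : P | (N p : ℝ) ≤ x}, 1 / (N p : ℝ)) - Real.log (Real.log x))
    atTop (𝓝 A)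

/-- The constant `𝔅 = -π²/6`. -/
def Bconst : ℝ := -(Real.pi ^ 2) / 6

/-- The constant `ℭ₁`, given the Mertens constant `A`. -/
def C1const {P : Type*} (N : P → ℕ) (h : ℕ) (A : ℝ) : ℝ :=
  A - ∑' p : P, ((N p : ℝ) - 1) / ((N p : ℝ) * ((N p : ℝ) ^ h - 1))

/-- The constant `ℭ₂`, given the Mertens constant `A`. -/
def C2const {P : Type*} (N : P → ℕ) (h : ℕ) (A : ℝ) : ℝ :=
  C1const N h A ^ 2 + C1const N h A + Bconst -
    ∑' p : P, (((N p : ℝ) ^ (h - 1) - 1) / ((N p : ℝ) ^ h - 1)) ^ 2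

/-- The convergent series `𝔏_h(r)`. -/
def LhSum {P : Type*} (N : P → ℕ) (h : ℕ) (r : ℝ) : ℝ :=
  ∑' p : P, 1 / ((N p : ℝ) ^ (r / (h : ℝ) - 1) *
    ((N p : ℝ) - (N p : ℝ) ^ (1 - 1 / (h : ℝ)) + 1))

/-- The constant `𝔇₁`, given the Mertens constant `A`. -/
def D1const {P : Type*} (N : P → ℕ) (h : ℕ) (A : ℝ) : ℝ :=
  A - Real.log (h : ℝ) + LhSum N h ((h : ℝ) + 1) - LhSum N h (2 * (h : ℝ))

/-- The constant `𝔇₂`, given the Mertens constant `A`. -/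
def D2const {P : Type*} (N : P → ℕ) (h : ℕ) (A : ℝ) : ℝ :=
  D1const N h A ^ 2 + D1const N h A + Bconst -
    ∑' p : P, (1 / ((N p : ℝ) - (N p : ℝ) ^ (1 - 1 / (h : ℝ)) + 1)) ^ 2

/-- The error term `R_{S_h}(x)` for `h`-free counts. -/
def RSfree (h : ℕ) (θ : ℝ) (x : ℝ) : ℝ :=
  if 1 / (h : ℝ) < θ then x ^ θ
  else if 1 / (h : ℝ) = θ then x ^ (1 / (h : ℝ)) * Real.log x
  else x ^ (1 / (h : ℝ))

/-- The error term `R_{N_h}(x)` for `h`-full counts. -/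
def RNfull (h : ℕ) (θ : ℝ) (x : ℝ) : ℝ :=
  if (h : ℝ) / ((h : ℝ) + 1) < θ then x ^ (θ / (h : ℝ))
  else if ∃ i : ℕ, 1 ≤ i ∧ i ≤ h - 1 ∧ θ = (h : ℝ) / ((h : ℝ) + (i : ℝ)) then
    x ^ (1 / ((h : ℝ) + 1)) * Real.log x
  else x ^ (1 / ((h : ℝ) + 1))

/-!
Let `a n` count the elements of norm `n`, let `Λ` be the weight `log N(p)` placed on the prime
powers, so that `a · log = a * Λ` for Dirichlet convolution, and write
`(α ∘ F)(x) = ∑_{n ≤ x} α(n) F(x / n)`. By (★) and partial summation there are constants `c`, `e`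
such that `F(x) = ∑_{n ≤ x} Λ(n) x / n - x log x - c x + e` satisfies `a ∘ F = O(x^σ)` with
`σ < 1`. Since the Dirichlet inverse of `a` is dominated by `a`, convolving with it gives
`F(x) = O(x)`, which is Mertens' first theorem for prime powers. The proper prime powers contribute
`O(1)`, and partial summation against `1 / log t` turns the first theorem into the second one with
error `O(1 / log x)`. The sum over `k` in the theorem equals
`1 / N(p) - (N(p) - 1) / (N(p) (N(p)^h - 1))`, and the subtracted terms are `O(N(p)^(-2))`, so that
their tail beyond `x` is `O(1 / log x)` too.
-/

section

open Finset MeasureTheory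

section AbelSummation

variable {c : ℕ → ℝ} {f f' M M' Q H H' : ℝ → ℝ} {x y x₀ : ℝ}

theorem sum_mul_sub_antideriv_eq (hx : 0 ≤ x) (hxy : x ≤ y)
    (hf : ∀ t ∈ Set.Icc x y, HasDerivAt f (f' t) t) (hf' : ContinuousOn f' (Set.Icc x y))
    (hM : ∀ t ∈ Set.Icc x y, HasDerivAt M (M' t) t)
    (hQ : ∀ t ∈ Set.Icc x y, HasDerivAt Q (f t * M' t) t) :
    ∑ k ∈ Ioc ⌊x⌋₊ ⌊y⌋₊, f k * c k - (Q y - Q x) =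
      f y * (∑ k ∈ Icc 0 ⌊y⌋₊, c k - M y) - f x * (∑ k ∈ Icc 0 ⌊x⌋₊, c k - M x) -
        ∫ t in x..y, f' t * (∑ k ∈ Icc 0 ⌊t⌋₊, c k - M t) := by
  have hderiv : Set.EqOn (deriv f) f' (Set.Icc x y) := fun t ht => (hf t ht).deriv
  have hf'_int : IntegrableOn f' (Set.Icc x y) := hf'.integrableOn_Icc
  have abel := sum_mul_eq_sub_sub_integral_mul c hx hxy
    (fun t ht => (hf t ht).differentiableAt) (hf'_int.congr_fun hderiv.symm measurableSet_Icc)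
  have integral_deriv : ∫ t in Set.Ioc x y, deriv f t * ∑ k ∈ Icc 0 ⌊t⌋₊, c k =
      ∫ t in x..y, f' t * ∑ k ∈ Icc 0 ⌊t⌋₊, c k := by
    rw [intervalIntegral.integral_of_le hxy]
    exact setIntegral_congr_fun measurableSet_Ioc fun t ht => by
      simp only [hderiv (Set.Ioc_subset_Icc_self ht)]
  have hsum_int :
      IntervalIntegrable (fun t => f' t * ∑ k ∈ Icc 0 ⌊t⌋₊, c k) volume x y :=
    (intervalIntegrable_iff_integrableOn_Icc_of_le hxy).mpr
      (integrableOn_mul_sum_Icc c hx hf'_int)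
  have hM_int : IntervalIntegrable (fun t => f' t * M t) volume x y :=
    ContinuousOn.intervalIntegrable_of_Icc hxy
      (hf'.mul fun t ht => (hM t ht).continuousAt.continuousWithinAt)
  have integral_main : ∫ t in x..y, f' t * M t = (f y * M y - Q y) - (f x * M x - Q x) :=
    intervalIntegral.integral_eq_sub_of_hasDerivAt (f := f * M - Q)
      (fun t ht => by
        rw [Set.uIcc_of_le hxy] at ht
        simpa using ((hf t ht).mul (hM t ht)).sub (hQ t ht)) hM_int
  simp only [mul_sub]
  rw [abel, integral_deriv, intervalIntegral.integral_sub hsum_int hM_int, integral_main]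
  ring

theorem abs_sum_mul_sub_antideriv_le (hx : 0 ≤ x) (hxy : x ≤ y)
    (hf : ∀ t ∈ Set.Icc x y, HasDerivAt f (f' t) t) (hf' : ContinuousOn f' (Set.Icc x y))
    (hM : ∀ t ∈ Set.Icc x y, HasDerivAt M (M' t) t)
    (hQ : ∀ t ∈ Set.Icc x y, HasDerivAt Q (f t * M' t) t)
    (hH : ∀ t ∈ Set.Icc x y, HasDerivAt H (-H' t) t)
    (hfE : ∀ t ∈ Set.Icc x y, |f t * (∑ k ∈ Icc 0 ⌊t⌋₊, c k - M t)| ≤ H t)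
    (hf'E : ∀ t ∈ Set.Icc x y, |f' t * (∑ k ∈ Icc 0 ⌊t⌋₊, c k - M t)| ≤ H' t) :
    |∑ k ∈ Ioc ⌊x⌋₊ ⌊y⌋₊, f k * c k - (Q y - Q x)| ≤ 2 * H x := by
  have hnegH : ∀ t ∈ Set.Icc x y, HasDerivAt (-H) (H' t) t := fun t ht => by
    simpa using (hH t ht).neg
  have hH'_int : IntervalIntegrable H' volume x y := by
    refine intervalIntegral.intervalIntegrable_deriv_of_nonneg (g := -H) ?_ ?_ ?_
    · rw [Set.uIcc_of_le hxy]
      exact fun t ht => (hnegH t ht).continuousAt.continuousWithinAt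
    · rw [min_eq_left hxy, max_eq_right hxy]
      exact fun t ht => hnegH t (Set.Ioo_subset_Icc_self ht)
    · rw [min_eq_left hxy, max_eq_right hxy]
      exact fun t ht => (abs_nonneg _).trans (hf'E t (Set.Ioo_subset_Icc_self ht))
  have integral_H' : ∫ t in x..y, H' t = H x - H y := by
    rw [intervalIntegral.integral_eq_sub_of_hasDerivAt
      (fun t ht => hnegH t (Set.uIcc_of_le hxy ▸ ht)) hH'_int, Pi.neg_apply, Pi.neg_apply]
    ring
  have integral_le :
      |∫ t in x..y, f' t * (∑ k ∈ Icc 0 ⌊t⌋₊, c k - M t)| ≤ H x - H y := by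
    rw [← integral_H', ← Real.norm_eq_abs]
    exact intervalIntegral.norm_integral_le_of_norm_le hxy
      (Eventually.of_forall fun t ht => hf'E t (Set.Ioc_subset_Icc_self ht)) hH'_int
  have left_le := hfE x ⟨le_rfl, hxy⟩
  have right_le := hfE y ⟨hxy, le_rfl⟩
  rw [sum_mul_sub_antideriv_eq hx hxy hf hf' hM hQ]
  rw [abs_le] at *
  constructor <;> linarith

theorem exists_forall_abs_sub_le_of_cauchy {D r : ℝ → ℝ} (hr : Tendsto r atTop (𝓝 0))
    (hD : ∀ x y, x₀ ≤ x → x ≤ y → |D y - D x| ≤ r x) :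
    ∃ l, ∀ x, x₀ ≤ x → |D x - l| ≤ r x := by
  have hcauchy : CauchySeq D := by
    refine Metric.cauchySeq_iff'.mpr fun ε hε => ?_
    obtain ⟨x, hx, hx₀⟩ := ((hr.eventually_lt_const hε).and (eventually_ge_atTop x₀)).exists
    exact ⟨x, fun y hy => (hD x y hx₀ hy).trans_lt hx⟩
  obtain ⟨l, hl⟩ := cauchySeq_tendsto_of_complete hcauchy
  refine ⟨l, fun x hx => ?_⟩
  rw [abs_sub_comm]
  exact le_of_tendsto (hl.sub_const _).abs
    ((eventually_ge_atTop x).mono fun y hy => hD x y hx hy)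

theorem exists_forall_abs_sum_mul_sub_antideriv_sub_le (hx₀ : 0 ≤ x₀)
    (hf : ∀ t ∈ Set.Ici x₀, HasDerivAt f (f' t) t) (hf' : ContinuousOn f' (Set.Ici x₀))
    (hM : ∀ t ∈ Set.Ici x₀, HasDerivAt M (M' t) t)
    (hQ : ∀ t ∈ Set.Ici x₀, HasDerivAt Q (f t * M' t) t)
    (hH : ∀ t ∈ Set.Ici x₀, HasDerivAt H (-H' t) t) (hH_lim : Tendsto H atTop (𝓝 0))
    (hfE : ∀ t ∈ Set.Ici x₀, |f t * (∑ k ∈ Icc 0 ⌊t⌋₊, c k - M t)| ≤ H t)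
    (hf'E : ∀ t ∈ Set.Ici x₀, |f' t * (∑ k ∈ Icc 0 ⌊t⌋₊, c k - M t)| ≤ H' t) :
    ∃ l, ∀ x, x₀ ≤ x → |∑ k ∈ Ioc 0 ⌊x⌋₊, f k * c k - Q x - l| ≤ 2 * H x := by
  refine exists_forall_abs_sub_le_of_cauchy (by simpa using hH_lim.const_mul 2)
    fun x y hx hxy => ?_
  have hsub : Set.Icc x y ⊆ Set.Ici x₀ := fun t ht => hx.trans ht.1
  have key := abs_sum_mul_sub_antideriv_le (hx₀.trans hx) hxy (fun t ht => hf t (hsub ht))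
    (hf'.mono hsub) (fun t ht => hM t (hsub ht)) (fun t ht => hQ t (hsub ht))
    (fun t ht => hH t (hsub ht)) (fun t ht => hfE t (hsub ht)) (fun t ht => hf'E t (hsub ht))
  rw [← sum_Ioc_consecutive _ (Nat.zero_le _) (Nat.floor_le_floor hxy)]
  convert key using 2
  ring

end AbelSummation

section PowerSaving

variable {a : ArithmeticFunction ℝ} {κ θ : ℝ}

theorem sum_Icc_zero_eq_sum_Ioc_zero {R : Type*} [AddCommMonoid R] (a : ArithmeticFunction R)
    (n : ℕ) :
    ∑ k ∈ Icc 0 n, a k = ∑ k ∈ Ioc 0 n, a k := by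
  rw [← sum_Ioc_add_eq_sum_Icc (Nat.zero_le n), a.map_zero, add_zero]

theorem rpow_isBigO_rpow_of_le {r s : ℝ} (h : r ≤ s) :
    (fun t : ℝ => t ^ r) =O[𝓟 (Set.Ici 1)] fun t => t ^ s :=
  isBigO_principal.mpr ⟨1, fun t ht => by
    have ht' : (1 : ℝ) ≤ t := ht
    rw [one_mul, Real.norm_of_nonneg (by positivity), Real.norm_of_nonneg (by positivity)]
    exact Real.rpow_le_rpow_of_exponent_le ht' h⟩

theorem log_isBigO_rpow {ε : ℝ} (hε : 0 < ε) :
    Real.log =O[𝓟 (Set.Ici 1)] fun t => t ^ ε :=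
  isBigO_principal.mpr ⟨ε⁻¹, fun t ht => by
    have ht' : (1 : ℝ) ≤ t := ht
    rw [Real.norm_of_nonneg (Real.log_nonneg ht'), Real.norm_of_nonneg (by positivity),
      inv_mul_eq_div]
    exact Real.log_le_rpow_div (by positivity) hε⟩

theorem isBigO_mul_rpow {g₁ g₂ : ℝ → ℝ} {r s : ℝ}
    (h₁ : g₁ =O[𝓟 (Set.Ici 1)] fun t => t ^ r) (h₂ : g₂ =O[𝓟 (Set.Ici 1)] fun t => t ^ s) :
    (fun t => g₁ t * g₂ t) =O[𝓟 (Set.Ici 1)] fun t => t ^ (r + s) :=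
  (h₁.mul h₂).congr' .rfl <| eventuallyEq_principal.mpr fun _ ht =>
    (Real.rpow_add (zero_lt_one.trans_le ht) r s).symm

theorem exists_sum_mul_sub_antideriv_sub_isBigO {f f' Q : ℝ → ℝ} {δ : ℝ} (hδ : 0 < δ)
    (ha : (fun t => ∑ k ∈ Ioc 0 ⌊t⌋₊, a k - κ * t) =O[𝓟 (Set.Ici 1)] fun t => t ^ θ)
    (hf : ∀ t ∈ Set.Ici 1, HasDerivAt f (f' t) t) (hf' : ContinuousOn f' (Set.Ici 1))
    (hQ : ∀ t ∈ Set.Ici 1, HasDerivAt Q (f t * κ) t)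
    (hf_le : f =O[𝓟 (Set.Ici 1)] fun t => t ^ (-δ - θ))
    (hf'_le : f' =O[𝓟 (Set.Ici 1)] fun t => t ^ (-δ - 1 - θ)) :
    ∃ l, (fun x => ∑ k ∈ Ioc 0 ⌊x⌋₊, f k * a k - Q x - l)
      =O[𝓟 (Set.Ici 1)] fun x => x ^ (-δ) := by
  simp only [← sum_Icc_zero_eq_sum_Ioc_zero] at ha
  obtain ⟨C₀, hC₀⟩ := isBigO_principal.mp (isBigO_mul_rpow hf_le ha)
  obtain ⟨C₁, hC₁⟩ := isBigO_principal.mp (isBigO_mul_rpow hf'_le ha)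
  simp only [sub_add_cancel, Real.norm_eq_abs] at hC₀ hC₁
  have rpow_nonneg : ∀ t ∈ Set.Ici (1 : ℝ), ∀ r : ℝ, 0 ≤ t ^ r := fun _ ht =>
    Real.rpow_nonneg (zero_le_one.trans ht)
  set C := max C₀ (C₁ / δ)
  have hH : ∀ t ∈ Set.Ici (1 : ℝ),
      HasDerivAt (fun t => C * t ^ (-δ)) (-(C * δ * t ^ (-δ - 1))) t := fun _ ht => by
    convert! (Real.hasDerivAt_rpow_const (p := -δ)
      (Or.inl (zero_lt_one.trans_le ht).ne')).const_mul C using 1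
    ring
  obtain ⟨l, hl⟩ := exists_forall_abs_sum_mul_sub_antideriv_sub_le zero_le_one hf hf'
    (fun t _ => by simpa using (hasDerivAt_id t).const_mul κ) hQ hH
    (by simpa using (tendsto_rpow_neg_atTop hδ).const_mul C)
    (fun t ht => (hC₀ t ht).trans (by
      rw [abs_of_nonneg (rpow_nonneg t ht _)]
      exact mul_le_mul_of_nonneg_right (le_max_left _ _) (rpow_nonneg t ht _)))
    (fun t ht => (hC₁ t ht).trans (by
      rw [abs_of_nonneg (rpow_nonneg t ht _)]
      exact mul_le_mul_of_nonneg_right ((div_le_iff₀ hδ).mp (le_max_right _ _))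
        (rpow_nonneg t ht _)))
  refine ⟨l, isBigO_principal.mpr ⟨2 * C, fun x hx => ?_⟩⟩
  rw [Real.norm_eq_abs, Real.norm_eq_abs, abs_of_nonneg (rpow_nonneg x hx _), mul_assoc]
  exact hl x hx

theorem exists_sum_inv_mul_sub_log_isBigO (hθ : θ < 1)
    (ha : (fun t => ∑ k ∈ Ioc 0 ⌊t⌋₊, a k - κ * t) =O[𝓟 (Set.Ici 1)] fun t => t ^ θ) :
    ∃ l, (fun x => ∑ k ∈ Ioc 0 ⌊x⌋₊, (k : ℝ)⁻¹ * a k - κ * Real.log x - l)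
      =O[𝓟 (Set.Ici 1)] fun x => x ^ (θ - 1) := by
  have hpos : ∀ t ∈ Set.Ici (1 : ℝ), 0 < t := fun t ht => zero_lt_one.trans_le ht
  rw [← neg_sub 1 θ]
  refine exists_sum_mul_sub_antideriv_sub_isBigO (f := fun t => t⁻¹) (sub_pos.mpr hθ) ha
    (fun t ht => hasDerivAt_inv (hpos t ht).ne')
    (fun t ht => ?_) (fun t ht => ?_) ?_ ?_
  · exact ((continuousAt_id.pow 2).inv₀ (pow_pos (hpos t ht) 2).ne').neg.continuousWithinAt
  · simpa only [mul_comm] using (Real.hasDerivAt_log (hpos t ht).ne').const_mul κ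
  · refine .of_bound 1 (eventually_principal.mpr fun t _ => ?_)
    rw [show -(1 - θ) - θ = -1 by ring, Real.rpow_neg_one, one_mul]
  · refine .of_bound 1 (eventually_principal.mpr fun t ht => ?_)
    rw [show -(1 - θ) - 1 - θ = -(2 : ℕ) by push_cast; ring, Real.rpow_neg (hpos t ht).le,
      Real.rpow_natCast, norm_neg, one_mul]

theorem exists_sum_log_div_mul_sub_log_sq_isBigO {s : ℝ} (hs : θ < s) (hs1 : s < 1)
    (ha : (fun t => ∑ k ∈ Ioc 0 ⌊t⌋₊, a k - κ * t) =O[𝓟 (Set.Ici 1)] fun t => t ^ θ) :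
    ∃ l, (fun x => ∑ k ∈ Ioc 0 ⌊x⌋₊, Real.log k / k * a k - κ / 2 * Real.log x ^ 2 - l)
      =O[𝓟 (Set.Ici 1)] fun x => x ^ (s - 1) := by
  have hpos : ∀ t ∈ Set.Ici (1 : ℝ), 0 < t := fun t ht => zero_lt_one.trans_le ht
  have hlog := log_isBigO_rpow (sub_pos.mpr hs)
  have hone : (fun _ : ℝ => (1 : ℝ)) =O[𝓟 (Set.Ici 1)] fun t => t ^ (s - θ) := by
    simpa using rpow_isBigO_rpow_of_le (sub_nonneg.mpr hs.le)
  rw [← neg_sub 1 s]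
  refine exists_sum_mul_sub_antideriv_sub_isBigO (f := fun t => Real.log t / t)
    (f' := fun t => (1 - Real.log t) / t ^ 2) (sub_pos.mpr hs1) ha
    (fun t ht => ?_) (fun t ht => ?_) (fun t ht => ?_) ?_ ?_
  · convert! (Real.hasDerivAt_log (hpos t ht).ne').div (hasDerivAt_id t) (hpos t ht).ne' using 1
    simp [(hpos t ht).ne']
  · exact ((continuousAt_const.sub (Real.continuousAt_log (hpos t ht).ne')).div
      (continuousAt_id.pow 2) (pow_pos (hpos t ht) 2).ne').continuousWithinAt
  · convert! ((Real.hasDerivAt_log (hpos t ht).ne').pow 2).const_mul (κ / 2) using 1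
    ring
  · refine (isBigO_mul_rpow hlog (isBigO_refl (fun t : ℝ => t ^ (-1 : ℝ)) _)).congr' ?_ ?_
    · exact .of_forall fun t => by simp only [Real.rpow_neg_one, div_eq_mul_inv]
    · exact .of_forall fun t => by ring_nf
  · refine (isBigO_mul_rpow (hone.sub hlog)
      (isBigO_refl (fun t : ℝ => t ^ (-(2 : ℕ) : ℝ)) _)).congr' ?_ ?_
    · refine eventuallyEq_principal.mpr fun t ht => ?_
      simp only [Real.rpow_neg (hpos t ht).le, Real.rpow_natCast, div_eq_mul_inv]
    · exact .of_forall fun t => by push_cast; ring_nf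

theorem exists_sum_rpow_neg_mul_sub_isBigO {σ : ℝ} (hσ : θ < σ) (hσ1 : σ ≠ 1)
    (ha : (fun t => ∑ k ∈ Ioc 0 ⌊t⌋₊, a k - κ * t) =O[𝓟 (Set.Ici 1)] fun t => t ^ θ) :
    ∃ l, (fun x : ℝ => ∑ k ∈ Ioc 0 ⌊x⌋₊, (k : ℝ) ^ (-σ) * a k - κ / (1 - σ) * x ^ (1 - σ) - l)
      =O[𝓟 (Set.Ici 1)] fun x => x ^ (θ - σ) := by
  have hpos : ∀ t ∈ Set.Ici (1 : ℝ), 0 < t := fun t ht => zero_lt_one.trans_le ht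
  have hσ' : 1 - σ ≠ 0 := sub_ne_zero.mpr hσ1.symm
  rw [← neg_sub σ θ]
  refine exists_sum_mul_sub_antideriv_sub_isBigO
    (f := fun t => t ^ (-σ)) (f' := fun t => -σ * t ^ (-σ - 1)) (sub_pos.mpr hσ) ha
    (fun t ht => Real.hasDerivAt_rpow_const (.inl (hpos t ht).ne'))
    (fun t ht => (continuousAt_const.mul
      (Real.continuousAt_rpow_const _ _ (.inl (hpos t ht).ne'))).continuousWithinAt)
    (fun t ht => ?_) ?_ ?_
  · convert! (Real.hasDerivAt_rpow_const (p := 1 - σ) (.inl (hpos t ht).ne')).const_mul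
      (κ / (1 - σ)) using 1
    rw [show 1 - σ - 1 = -σ by ring]
    field_simp
  · simpa using isBigO_refl (fun t : ℝ => t ^ (-σ)) (𝓟 (Set.Ici 1))
  · rw [show -(σ - θ) - 1 - θ = -σ - 1 by ring]
    exact (isBigO_refl _ _).const_mul_left _

theorem sum_rpow_neg_mul_isBigO_max {σ : ℝ} (hσ : θ < σ) (hθ : θ ≤ 1) (hσ1 : σ ≠ 1)
    (ha : (fun t => ∑ k ∈ Ioc 0 ⌊t⌋₊, a k - κ * t) =O[𝓟 (Set.Ici 1)] fun t => t ^ θ) :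
    (fun x : ℝ => ∑ k ∈ Ioc 0 ⌊x⌋₊, (k : ℝ) ^ (-σ) * a k)
      =O[𝓟 (Set.Ici 1)] fun x => x ^ max (1 - σ) 0 := by
  obtain ⟨l, hl⟩ := exists_sum_rpow_neg_mul_sub_isBigO hσ hσ1 ha
  have herror := hl.trans (rpow_isBigO_rpow_of_le
    ((sub_le_sub_right hθ σ).trans (le_max_left (1 - σ) 0)))
  have hmain := (rpow_isBigO_rpow_of_le (le_max_left (1 - σ) 0)).const_mul_left (κ / (1 - σ))
  have hconst : (fun _ : ℝ => l) =O[𝓟 (Set.Ici 1)] fun x => x ^ max (1 - σ) 0 := by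
    simpa using (rpow_isBigO_rpow_of_le (le_max_right (1 - σ) 0)).const_mul_left l
  exact ((herror.add hmain).add hconst).congr_left fun x => by ring

end PowerSaving

section GeneralizedConvolution

/-- Apostol's generalized convolution `(α ∘ F)(x) = ∑_{n ≤ x} α(n) F(x / n)` of an arithmetic
function with a function of a real variable. It makes functions on `[1, ∞)` a module over the
Dirichlet ring, so that `F` can be recovered from `a ∘ F` by means of `a⁻¹`. -/
def genConv (α : ArithmeticFunction ℝ) (F : ℝ → ℝ) (x : ℝ) : ℝ :=
  ∑ n ∈ Ioc 0 ⌊x⌋₊, α n * F (x / n)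

theorem sum_Ioc_sum_divisorsAntidiagonal {R : Type*} [AddCommMonoid R] (G : ℕ → ℕ → R) (X : ℕ) :
    ∑ n ∈ Ioc 0 X, ∑ d ∈ n.divisorsAntidiagonal, G d.1 d.2 =
      ∑ i ∈ Ioc 0 X, ∑ j ∈ Ioc 0 (X / i), G i j := by
  rw [sum_sigma', sum_sigma']
  refine sum_bij' (fun s _ => ⟨s.2.1, s.2.2⟩) (fun s _ => ⟨s.1 * s.2, s.1, s.2⟩) ?_ ?_ ?_ ?_ ?_
  · rintro ⟨n, i, j⟩ h
    simp only [mem_sigma, mem_Ioc, Nat.mem_divisorsAntidiagonal] at h ⊢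
    obtain ⟨⟨hn, hnX⟩, rfl, -⟩ := h
    have hi := Nat.pos_of_mul_pos_right hn
    have hj := Nat.pos_of_mul_pos_left hn
    exact ⟨⟨hi, (Nat.le_mul_of_pos_right i hj).trans hnX⟩, hj,
      (Nat.le_div_iff_mul_le hi).mpr (by rwa [mul_comm])⟩
  · rintro ⟨i, j⟩ h
    simp only [mem_sigma, mem_Ioc, Nat.mem_divisorsAntidiagonal] at h ⊢
    obtain ⟨⟨hi, -⟩, hj, hjX⟩ := h
    have hij := Nat.mul_pos hi hj
    exact ⟨⟨hij, by rwa [mul_comm, ← Nat.le_div_iff_mul_le hi]⟩, trivial, hij.ne'⟩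
  · rintro ⟨n, i, j⟩ h
    simp only [mem_sigma, Nat.mem_divisorsAntidiagonal] at h
    obtain ⟨-, rfl, -⟩ := h
    rfl
  · exact fun _ _ => rfl
  · exact fun _ _ => rfl

theorem genConv_mul (α β : ArithmeticFunction ℝ) (F : ℝ → ℝ) :
    genConv (α * β) F = genConv α (genConv β F) := by
  funext x
  simp only [genConv, Nat.floor_div_natCast, mul_sum]
  rw [← sum_Ioc_sum_divisorsAntidiagonal fun i j => α i * (β j * F (x / i / j))]
  refine sum_congr rfl fun n _ => ?_
  rw [ArithmeticFunction.mul_apply, sum_mul]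
  refine sum_congr rfl fun d hd => ?_
  rw [← (Nat.mem_divisorsAntidiagonal.mp hd).1, Nat.cast_mul, div_mul_eq_div_div, mul_assoc]

theorem genConv_one (F : ℝ → ℝ) {x : ℝ} (hx : 1 ≤ x) : genConv 1 F x = F x := by
  rw [genConv, sum_eq_single_of_mem 1 (by simpa [Nat.one_le_floor_iff] using hx)
    fun n _ hn => by rw [ArithmeticFunction.one_apply_ne hn, zero_mul]]
  simp

theorem genConv_isBigO_id {a b : ArithmeticFunction ℝ} {F : ℝ → ℝ} {σ : ℝ}
    (hb : ∀ n, |b n| ≤ a n) (hF : F =O[𝓟 (Set.Ici 1)] fun x => x ^ σ)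
    (ha : (fun x : ℝ => ∑ k ∈ Ioc 0 ⌊x⌋₊, (k : ℝ) ^ (-σ) * a k)
      =O[𝓟 (Set.Ici 1)] fun x => x ^ (1 - σ)) :
    genConv b F =O[𝓟 (Set.Ici 1)] fun x => x := by
  obtain ⟨C, hC⟩ := isBigO_principal.mp hF
  have key : ∀ x ∈ Set.Ici (1 : ℝ),
      ‖genConv b F x‖ ≤ C * ‖x ^ σ * ∑ k ∈ Ioc 0 ⌊x⌋₊, (k : ℝ) ^ (-σ) * a k‖ := by
    intro x hx
    have hx0 : 0 < x := zero_lt_one.trans_le hx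
    have term_le : ∀ n ∈ Ioc 0 ⌊x⌋₊,
        ‖b n * F (x / n)‖ ≤ C * (x ^ σ * ((n : ℝ) ^ (-σ) * a n)) := by
      intro n hn
      obtain ⟨hn0, hnx⟩ := mem_Ioc.mp hn
      have hn0' : (0 : ℝ) < n := Nat.cast_pos.mpr hn0
      have hquot := hC (x / n) ((one_le_div hn0').mpr ((Nat.le_floor_iff hx0.le).mp hnx))
      rw [Real.norm_of_nonneg (Real.rpow_nonneg (by positivity) σ),
        Real.div_rpow hx0.le hn0'.le, div_eq_mul_inv (x ^ σ), ← Real.rpow_neg hn0'.le] at hquot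
      rw [norm_mul]
      refine (mul_le_mul (hb n) hquot (norm_nonneg _) ((abs_nonneg _).trans (hb n))).trans_eq ?_
      ring
    have hnonneg : 0 ≤ x ^ σ * ∑ k ∈ Ioc 0 ⌊x⌋₊, (k : ℝ) ^ (-σ) * a k :=
      mul_nonneg (by positivity)
        (sum_nonneg fun n _ => mul_nonneg (by positivity) ((abs_nonneg _).trans (hb n)))
    rw [Real.norm_of_nonneg hnonneg, mul_sum, mul_sum]
    exact (norm_sum_le _ _).trans (sum_le_sum term_le)
  refine (isBigO_principal.mpr ⟨C, key⟩).trans ?_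
  simpa using isBigO_mul_rpow (isBigO_refl (fun x : ℝ => x ^ σ) _) ha

end GeneralizedConvolution

section DirichletInverse

variable {a b L : ArithmeticFunction ℝ}

theorem mul_pmul_log (f g : ArithmeticFunction ℝ) :
    (f * g).pmul .log = f.pmul .log * g + f * g.pmul .log := by
  ext n
  simp only [ArithmeticFunction.pmul_apply, ArithmeticFunction.mul_apply,
    ArithmeticFunction.add_apply, ArithmeticFunction.log_apply, sum_mul, ← sum_add_distrib]
  refine sum_congr rfl fun d hd => ?_
  obtain ⟨hd_mul, hn⟩ := Nat.mem_divisorsAntidiagonal.mp hd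
  obtain ⟨h₁, h₂⟩ := mul_ne_zero_iff.mp (hd_mul ▸ hn)
  rw [← hd_mul, Nat.cast_mul, Real.log_mul (Nat.cast_ne_zero.mpr h₁) (Nat.cast_ne_zero.mpr h₂)]
  ring

theorem pmul_log_eq_neg_mul_of_mul_eq_one (hab : a * b = 1) (hlog : a.pmul .log = a * L) :
    b.pmul .log = -(L * b) := by
  have log_one : (1 : ArithmeticFunction ℝ).pmul .log = 0 := by
    ext n
    obtain rfl | hn := eq_or_ne n 1 <;> simp [*]
  have leibniz := mul_pmul_log a b
  rw [hab, log_one, hlog] at leibniz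
  refine eq_neg_of_add_eq_zero_right ?_
  calc L * b + b.pmul .log = a * b * (L * b + b.pmul .log) := by rw [hab, one_mul]
    _ = b * (a * L * b + a * b.pmul .log) := by ring
    _ = 0 := by rw [← leibniz, mul_zero]

/-- Both `a` and its inverse are determined recursively by `L`, and the recursion for `a`
majorizes the one for `b`. -/
theorem abs_le_of_mul_eq_one (ha : a 1 = 1) (hL : ∀ n, 0 ≤ L n)
    (hab : a * b = 1) (hlog : a.pmul .log = a * L) (n : ℕ) : |b n| ≤ a n := by
  induction n using Nat.strong_induction_on with
  | _ n ih =>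
    obtain rfl | rfl | hn : n = 0 ∨ n = 1 ∨ 1 < n := by lia
    · simp
    · have hb : b 1 = 1 := by simpa [ha] using congr($hab 1)
      simp [ha, hb]
    have hL1 : L 1 = 0 := by simpa [ha] using congr($hlog 1).symm
    have hlogn : 0 < Real.log n := Real.log_pos (Nat.one_lt_cast.mpr hn)
    refine le_of_mul_le_mul_right ?_ hlogn
    calc |b n| * Real.log n = |b.pmul .log n| := by
          rw [ArithmeticFunction.pmul_apply, ArithmeticFunction.log_apply, abs_mul,
            abs_of_pos hlogn]
      _ = |∑ d ∈ n.divisorsAntidiagonal, L d.1 * b d.2| := by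
          rw [pmul_log_eq_neg_mul_of_mul_eq_one hab hlog, ArithmeticFunction.neg_apply, abs_neg,
            ArithmeticFunction.mul_apply]
      _ ≤ ∑ d ∈ n.divisorsAntidiagonal, L d.1 * a d.2 := by
          refine (abs_sum_le_sum_abs _ _).trans (sum_le_sum fun d hd => ?_)
          obtain ⟨hd_mul, hn0⟩ := Nat.mem_divisorsAntidiagonal.mp hd
          rw [abs_mul, abs_of_nonneg (hL _)]
          obtain hd1 | hd1 := eq_or_ne d.1 1
          · simp [hd1, hL1]
          refine mul_le_mul_of_nonneg_left (ih _ ?_) (hL _)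
          obtain ⟨h₁, h₂⟩ := mul_ne_zero_iff.mp (hd_mul ▸ hn0)
          calc d.2 < d.1 * d.2 := lt_mul_of_one_lt_left (by lia) (by lia)
            _ = n := hd_mul
      _ = a n * Real.log n := by
          rw [← ArithmeticFunction.mul_apply, mul_comm L a, ← hlog,
            ArithmeticFunction.pmul_apply, ArithmeticFunction.log_apply]

end DirichletInverse

section MertensFirst

variable {a L : ArithmeticFunction ℝ} {κ θ : ℝ}

/-- The function to which Landau's inversion is applied: for suitable `c` and `e` its
generalized convolution with the counting function `a` loses all terms of order `x` and above,
while `genConv L id x = x * ∑_{k ≤ x} L k / k` is the sum in Mertens' first theorem. -/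
def mertensAux (L : ArithmeticFunction ℝ) (c e x : ℝ) : ℝ :=
  genConv L id x - x * Real.log x - c * x + e

theorem genConv_mertensAux (hlog : a.pmul .log = a * L) (c e : ℝ) {x : ℝ} (hx : 0 < x) :
    genConv a (mertensAux L c e) x =
      x * (2 * ∑ k ∈ Ioc 0 ⌊x⌋₊, Real.log k / k * a k -
        (Real.log x + c) * ∑ k ∈ Ioc 0 ⌊x⌋₊, (k : ℝ)⁻¹ * a k) + e * ∑ k ∈ Ioc 0 ⌊x⌋₊, a k := by
  have hconv : ∑ n ∈ Ioc 0 ⌊x⌋₊, a n * genConv L id (x / n) =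
      x * ∑ k ∈ Ioc 0 ⌊x⌋₊, Real.log k / k * a k :=
    calc ∑ n ∈ Ioc 0 ⌊x⌋₊, a n * genConv L id (x / n)
        = genConv (a.pmul .log) id x := by rw [hlog, genConv_mul, genConv]
      _ = _ := by
        rw [genConv, mul_sum]
        refine sum_congr rfl fun k _ => ?_
        rw [ArithmeticFunction.pmul_apply, ArithmeticFunction.log_apply, id]
        ring
  have hsplit : genConv a (mertensAux L c e) x =
      ∑ n ∈ Ioc 0 ⌊x⌋₊, a n * genConv L id (x / n) +
        x * (∑ k ∈ Ioc 0 ⌊x⌋₊, Real.log k / k * a k -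
          (Real.log x + c) * ∑ k ∈ Ioc 0 ⌊x⌋₊, (k : ℝ)⁻¹ * a k) + e * ∑ k ∈ Ioc 0 ⌊x⌋₊, a k := by
    simp only [genConv.eq_1 a, mertensAux, mul_sum, mul_sub, ← sum_sub_distrib,
      ← sum_add_distrib]
    refine sum_congr rfl fun n hn => ?_
    rw [Real.log_div hx.ne' (Nat.cast_ne_zero.mpr (mem_Ioc.mp hn).1.ne')]
    ring
  rw [hsplit, hconv]
  ring

theorem exists_genConv_mertensAux_isBigO (hκ : κ ≠ 0) {s σ : ℝ} (hs : θ < s) (hsσ : s < σ)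
    (hσ : σ < 1) (hlog : a.pmul .log = a * L)
    (ha : (fun t => ∑ k ∈ Ioc 0 ⌊t⌋₊, a k - κ * t) =O[𝓟 (Set.Ici 1)] fun t => t ^ θ) :
    ∃ c e, genConv a (mertensAux L c e) =O[𝓟 (Set.Ici 1)] fun x => x ^ σ := by
  obtain ⟨c₀, hS₀⟩ := exists_sum_inv_mul_sub_log_isBigO (hs.trans (hsσ.trans hσ)) ha
  obtain ⟨c₁, hS₁⟩ := exists_sum_log_div_mul_sub_log_sq_isBigO hs (hsσ.trans hσ) ha
  set c := -c₀ / κ with hc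
  set e := -(2 * c₁ - c * c₀) / κ with he
  refine ⟨c, e, ?_⟩
  have hid : (fun x : ℝ => x) =O[𝓟 (Set.Ici 1)] fun x => x ^ (1 : ℝ) := by
    simpa using isBigO_refl (fun x : ℝ => x) (𝓟 (Set.Ici 1))
  have hlogc : (fun x => Real.log x + c) =O[𝓟 (Set.Ici 1)] fun x => x ^ (σ - θ) :=
    (log_isBigO_rpow (sub_pos.mpr (hs.trans hsσ))).add
      (by simpa using (rpow_isBigO_rpow_of_le (sub_pos.mpr (hs.trans hsσ)).le).const_mul_left c)
  have herr₁ := (isBigO_mul_rpow hid (hS₁.const_mul_left 2)).trans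
    (rpow_isBigO_rpow_of_le (by linarith : 1 + (s - 1) ≤ σ))
  have herr₀ := (isBigO_mul_rpow hid (isBigO_mul_rpow hlogc hS₀)).trans
    (rpow_isBigO_rpow_of_le (by linarith : 1 + (σ - θ + (θ - 1)) ≤ σ))
  have herr := (ha.const_mul_left e).trans (rpow_isBigO_rpow_of_le (hs.trans hsσ).le)
  refine ((herr₁.sub herr₀).add herr).congr' ?_ .rfl
  refine eventuallyEq_principal.mpr fun x hx => ?_
  simp only [genConv_mertensAux hlog c e (zero_lt_one.trans_le hx)]
  rw [he, hc]
  field_simp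
  ring

theorem sum_div_sub_log_isBigO_one (hκ : κ ≠ 0) (hθ : θ < 1) (ha₁ : a 1 = 1)
    (hL : ∀ n, 0 ≤ L n) (hlog : a.pmul .log = a * L)
    (ha : (fun t => ∑ k ∈ Ioc 0 ⌊t⌋₊, a k - κ * t) =O[𝓟 (Set.Ici 1)] fun t => t ^ θ) :
    (fun x => ∑ k ∈ Ioc 0 ⌊x⌋₊, L k / k - Real.log x) =O[𝓟 (Set.Ici 1)] fun _ => (1 : ℝ) := by
  obtain ⟨s, hs, hs1⟩ := exists_between hθ
  obtain ⟨σ, hσ, hσ1⟩ := exists_between hs1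
  obtain ⟨b, hab⟩ : ∃ b, a * b = 1 :=
    (ArithmeticFunction.isUnit_iff_isUnit_apply_one.mpr (by simp [ha₁])).exists_right_inv
  obtain ⟨c, e, hconv⟩ := exists_genConv_mertensAux_isBigO hκ hs hσ hσ1 hlog ha
  have hpow : (fun x : ℝ => ∑ k ∈ Ioc 0 ⌊x⌋₊, (k : ℝ) ^ (-σ) * a k)
      =O[𝓟 (Set.Ici 1)] fun x => x ^ (1 - σ) := by
    simpa only [max_eq_left (sub_pos.mpr hσ1).le] using
      sum_rpow_neg_mul_isBigO_max (hs.trans hσ) hθ.le hσ1.ne ha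
  have haux : mertensAux L c e =O[𝓟 (Set.Ici 1)] fun x => x := by
    refine (genConv_isBigO_id (abs_le_of_mul_eq_one ha₁ hL hab hlog) hconv
      hpow).congr' ?_ .rfl
    refine eventuallyEq_principal.mpr fun x hx => ?_
    rw [← genConv_mul, mul_comm, hab, genConv_one _ hx]
  have hdiv : (fun x => mertensAux L c e x * x⁻¹) =O[𝓟 (Set.Ici 1)] fun _ => (1 : ℝ) :=
    (haux.mul (isBigO_refl (fun x : ℝ => x⁻¹) _)).congr' .rfl <|
      eventuallyEq_principal.mpr fun x hx => mul_inv_cancel₀ (zero_lt_one.trans_le hx).ne'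
  have hinv : (fun x : ℝ => x⁻¹) =O[𝓟 (Set.Ici 1)] fun _ => (1 : ℝ) := by
    simpa [Real.rpow_neg_one] using rpow_isBigO_rpow_of_le (by norm_num : (-1 : ℝ) ≤ 0)
  have hconst : (fun _ : ℝ => c) =O[𝓟 (Set.Ici 1)] fun _ => (1 : ℝ) :=
    isBigO_const_const c one_ne_zero _
  refine ((hdiv.add hconst).sub (hinv.const_mul_left e)).congr' ?_ .rfl
  refine eventuallyEq_principal.mpr fun x hx => ?_
  have hx0 : x ≠ 0 := (zero_lt_one.trans_le hx).ne'
  have hgen : genConv L id x = x * ∑ k ∈ Ioc 0 ⌊x⌋₊, L k / k := by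
    rw [genConv, mul_sum]
    exact sum_congr rfl fun k _ => by simp only [id]; ring
  simp only [mertensAux, hgen]
  field_simp
  ring

end MertensFirst

section NormSum

variable {ι : Type*} (ν : ι → ℕ) [Northcott ν]

/-- The elements of norm at most `X`, as a finset. -/
def normBall (X : ℕ) : Finset ι := (Northcott.finite_le (h := ν) X).toFinset

/-- The coefficients of the Dirichlet series `∑ i, w i * (ν i)^(-s)`: the value at `n` is the sum
of `w` over the fiber `ν i = n`. Elements of norm `0` are discarded. -/
def normSum (w : ι → ℝ) : ArithmeticFunction ℝ :=
  ⟨fun n => if n = 0 then 0 else ∑ i ∈ normBall ν n with ν i = n, w i, if_pos rfl⟩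

variable {ν}

@[simp]
theorem mem_normBall {X : ℕ} {i : ι} : i ∈ normBall ν X ↔ ν i ≤ X := by
  simp [normBall]

theorem normSum_apply {n : ℕ} (hn : n ≠ 0) (w : ι → ℝ) :
    normSum ν w n = ∑ i ∈ normBall ν n with ν i = n, w i :=
  if_neg hn

theorem mem_fiber_iff {n : ℕ} {i : ι} : i ∈ {i ∈ normBall ν n | ν i = n} ↔ ν i = n := by
  simpa using fun h : ν i = n => h.le

theorem normSum_nonneg {w : ι → ℝ} (hw : ∀ i, 0 ≤ w i) (n : ℕ) : 0 ≤ normSum ν w n := by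
  obtain rfl | hn := eq_or_ne n 0
  · simp
  · rw [normSum_apply hn]
    exact sum_nonneg fun i _ => hw i

theorem normSum_pmul_log (w : ι → ℝ) :
    (normSum ν w).pmul .log = normSum ν fun i => w i * Real.log (ν i) := by
  ext n
  obtain rfl | hn := eq_or_ne n 0
  · simp
  rw [ArithmeticFunction.pmul_apply, normSum_apply hn, normSum_apply hn, sum_mul]
  exact sum_congr rfl fun i hi => by rw [ArithmeticFunction.log_apply, mem_fiber_iff.mp hi]

theorem sum_mul_normSum (hν : ∀ i, 0 < ν i) (g : ℕ → ℝ) (w : ι → ℝ) (X : ℕ) :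
    ∑ n ∈ Ioc 0 X, g n * normSum ν w n = ∑ i ∈ normBall ν X, g (ν i) * w i := by
  have hmaps : ∀ i ∈ normBall ν X, ν i ∈ Ioc 0 X := fun i hi =>
    mem_Ioc.mpr ⟨hν i, mem_normBall.mp hi⟩
  rw [← sum_fiberwise_of_maps_to hmaps]
  refine sum_congr rfl fun n hn => ?_
  obtain ⟨hn0, hnX⟩ := mem_Ioc.mp hn
  have hfiber : {i ∈ normBall ν X | ν i = n} = {i ∈ normBall ν n | ν i = n} := by
    ext i
    rw [mem_fiber_iff, mem_filter, mem_normBall, and_iff_right_iff_imp]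
    exact fun h => h.trans_le hnX
  rw [normSum_apply hn0.ne', mul_sum, hfiber]
  exact sum_congr rfl fun i hi => by rw [mem_fiber_iff.mp hi]

theorem sum_normSum (hν : ∀ i, 0 < ν i) (w : ι → ℝ) (X : ℕ) :
    ∑ n ∈ Ioc 0 X, normSum ν w n = ∑ i ∈ normBall ν X, w i := by
  simpa using sum_mul_normSum hν 1 w X

theorem coe_normBall_floor {x : ℝ} (hx : 0 ≤ x) :
    (normBall ν ⌊x⌋₊ : Set ι) = {i | (ν i : ℝ) ≤ x} := by
  ext i
  simp [Nat.le_floor_iff hx]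

theorem finsum_mem_norm_le {x : ℝ} (hx : 0 ≤ x) (w : ι → ℝ) :
    ∑ᶠ i ∈ {i | (ν i : ℝ) ≤ x}, w i = ∑ i ∈ normBall ν ⌊x⌋₊, w i := by
  rw [← coe_normBall_floor hx, finsum_mem_coe_finset]

theorem ncard_norm_le {x : ℝ} (hx : 0 ≤ x) :
    {i | (ν i : ℝ) ≤ x}.ncard = #(normBall ν ⌊x⌋₊) := by
  rw [← coe_normBall_floor hx, Set.ncard_coe_finset]

end NormSum

section FreeMonoid

variable {P : Type*} {N : P → ℕ}

theorem Nm_add (m₁ m₂ : P →₀ ℕ) : Nm N (m₁ + m₂) = Nm N m₁ * Nm N m₂ :=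
  Finsupp.prod_add_index' (fun _ => pow_zero _) fun _ => pow_add _

theorem Nm_single (p : P) (k : ℕ) : Nm N (.single p k) = N p ^ k :=
  Finsupp.prod_single_index (pow_zero _)

theorem Nm_pos (hN : ∀ p, 0 < N p) (m : P →₀ ℕ) : 0 < Nm N m :=
  prod_pos fun p _ => pow_pos (hN p) _

theorem Nm_eq_one_iff (hN : ∀ p, 2 ≤ N p) {m : P →₀ ℕ} : Nm N m = 1 ↔ m = 0 := by
  refine ⟨fun h => ?_, fun h => h ▸ Finsupp.prod_zero_index⟩
  by_contra hm
  obtain ⟨p, hp⟩ := Finsupp.support_nonempty_iff.mpr hm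
  have hpow : N p ^ m p = 1 :=
    Nat.dvd_one.mp (h ▸ dvd_prod_of_mem (fun p => N p ^ m p) hp)
  exact (Nat.one_lt_pow (Finsupp.mem_support_iff.mp hp) (hN p)).ne' hpow

theorem log_Nm (hN : ∀ p, 0 < N p) (m : P →₀ ℕ) :
    Real.log (Nm N m) = ∑ p ∈ m.support, m p * Real.log (N p) := by
  simp only [Nm, Finsupp.prod, Nat.cast_prod, Nat.cast_pow]
  rw [Real.log_prod fun p _ => pow_ne_zero _ (Nat.cast_ne_zero.mpr (hN p).ne')]
  simp only [Real.log_pow]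

/-- The norm `N(p)^(k+1)` of the prime power `p^(k+1)`, encoded as the pair `(p, k)`. -/
def primePowNorm (N : P → ℕ) (q : P × ℕ) : ℕ := N q.1 ^ (q.2 + 1)

theorem northcott_primePowNorm [Northcott (Nm N)] : Northcott (primePowNorm N) where
  finite_le X := by
    have hinj : Function.Injective fun q : P × ℕ => Finsupp.single q.1 (q.2 + 1) := by
      rintro ⟨p, k⟩ ⟨p', k'⟩ h
      obtain ⟨rfl, hk⟩ | ⟨hk, -⟩ := (Finsupp.single_eq_single_iff ..).mp h
      · exact congrArg (Prod.mk p) (Nat.succ_injective hk)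
      · exact absurd hk k.succ_ne_zero
    refine ((Northcott.finite_le (h := Nm N) X).preimage hinj.injOn).subset fun q hq => ?_
    rwa [Set.mem_preimage, Set.mem_ofPred_eq, Nm_single]

theorem northcott_of_northcott_Nm [Northcott (Nm N)] : Northcott N where
  finite_le X := by
    refine ((Northcott.finite_le (h := Nm N) X).preimage
      (Finsupp.single_left_injective (one_ne_zero (α := ℕ))).injOn).subset fun p hp => ?_
    simpa [Nm_single] using hp

theorem sum_fiber_sum_primePow_eq_sum_divisorsAntidiagonal {R : Type*} [AddCommMonoid R]
    [Northcott (Nm N)] [Northcott (primePowNorm N)] {n : ℕ} (hn : n ≠ 0) (G : P → ℕ → R) :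
    ∑ m ∈ normBall (Nm N) n with Nm N m = n, ∑ p ∈ m.support, ∑ k ∈ range (m p), G p k =
      ∑ d ∈ n.divisorsAntidiagonal, ∑ m ∈ normBall (Nm N) d.1 with Nm N m = d.1,
        ∑ q ∈ normBall (primePowNorm N) d.2 with primePowNorm N q = d.2, G q.1 q.2 := by
  simp only [sum_sigma']
  refine sum_bij'
    (fun s _ => ⟨(Nm N (s.1 - .single s.2.1 (s.2.2 + 1)), N s.2.1 ^ (s.2.2 + 1)),
      s.1 - .single s.2.1 (s.2.2 + 1), s.2.1, s.2.2⟩)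
    (fun s _ => ⟨s.2.1 + .single s.2.2.1 (s.2.2.2 + 1), s.2.2.1, s.2.2.2⟩) ?_ ?_ ?_ ?_ ?_
  · rintro ⟨m, p, k⟩ h
    simp only [mem_sigma, mem_fiber_iff, Finsupp.mem_support_iff, mem_range,
      Nat.mem_divisorsAntidiagonal] at h ⊢
    obtain ⟨rfl, -, hk⟩ := h
    refine ⟨⟨?_, hn⟩, trivial, rfl⟩
    rw [← Nm_single, ← Nm_add, tsub_add_cancel_of_le (Finsupp.single_le_iff.mpr hk)]
  · rintro ⟨⟨d₁, d₂⟩, m, p, k⟩ h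
    simp only [mem_sigma, mem_fiber_iff, Finsupp.mem_support_iff, mem_range,
      Nat.mem_divisorsAntidiagonal] at h ⊢
    obtain ⟨⟨rfl, -⟩, rfl, rfl⟩ := h
    simp only [Nm_add, Nm_single, primePowNorm, Finsupp.add_apply, Finsupp.single_eq_same]
    lia
  · rintro ⟨m, p, k⟩ h
    simp only [mem_sigma, mem_range] at h ⊢
    rw [tsub_add_cancel_of_le (Finsupp.single_le_iff.mpr h.2.2)]
  · rintro ⟨⟨d₁, d₂⟩, m, p, k⟩ h
    simp only [mem_sigma, mem_fiber_iff] at h ⊢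
    obtain ⟨-, rfl, rfl⟩ := h
    simp only [add_tsub_cancel_right, primePowNorm]
  · exact fun _ _ => rfl

theorem normSum_one_pmul_log [Northcott (Nm N)] [Northcott (primePowNorm N)]
    (hN : ∀ p, 0 < N p) :
    (normSum (Nm N) 1).pmul .log =
      normSum (Nm N) 1 * normSum (primePowNorm N) fun q => Real.log (N q.1) := by
  rw [normSum_pmul_log]
  ext n
  obtain rfl | hn := eq_or_ne n 0
  · simp
  have hlog : ∀ m, (1 : (P →₀ ℕ) → ℝ) m * Real.log (Nm N m) =
      ∑ p ∈ m.support, ∑ _k ∈ range (m p), Real.log (N p) := fun m => by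
    simp [log_Nm hN]
  rw [normSum_apply hn, ArithmeticFunction.mul_apply, sum_congr rfl fun m _ => hlog m,
    sum_fiber_sum_primePow_eq_sum_divisorsAntidiagonal hn fun p _ => Real.log (N p)]
  refine sum_congr rfl fun d hd => ?_
  obtain ⟨h₁, h₂⟩ := mul_ne_zero_iff.mp ((Nat.mem_divisorsAntidiagonal.mp hd).1 ▸ hn)
  simp [normSum_apply h₁, normSum_apply h₂]

end FreeMonoid

section CountingFunction

theorem isBigO_principal_Ici_of_isBigO_atTop {f g : ℝ → ℝ} {x₀ : ℝ} (hfg : f =O[atTop] g)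
    (hg : ∀ t ∈ Set.Ici x₀, 1 ≤ g t)
    (hf : ∀ X, f =O[𝓟 (Set.Icc x₀ X)] fun _ => (1 : ℝ)) : f =O[𝓟 (Set.Ici x₀)] g := by
  obtain ⟨C, hC⟩ := hfg.bound
  obtain ⟨X, hX⟩ := eventually_atTop.mp hC
  have hlarge : f =O[𝓟 (Set.Ici X)] g := isBigO_principal.mpr ⟨C, hX⟩
  have hone : (fun _ => (1 : ℝ)) =O[𝓟 (Set.Icc x₀ X)] g :=
    isBigO_principal.mpr ⟨1, fun t ht => by
      simpa using (hg t ht.1).trans (le_abs_self _)⟩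
  refine (((hf X).trans hone).sup hlarge).mono ?_
  rw [sup_principal, principal_mono]
  exact fun t ht => (le_total t X).imp (fun h => ⟨ht, h⟩) id

variable {ι : Type*} {ν : ι → ℕ}

theorem northcott_of_ncard_sub_isBigO {κ θ : ℝ} (hκ : κ ≠ 0) (hθ : θ < 1)
    (hcount : (fun x : ℝ => ({i | (ν i : ℝ) ≤ x}.ncard : ℝ) - κ * x) =O[atTop] fun x => x ^ θ) :
    Northcott ν := by
  refine ⟨fun n => ?_⟩
  by_contra hinf
  -- `Set.ncard` of an infinite set is `0`.
  have hcount_eq : (fun x : ℝ => ({i | (ν i : ℝ) ≤ x}.ncard : ℝ) - κ * x)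
      =ᶠ[atTop] fun x => -κ * x := by
    filter_upwards [eventually_ge_atTop (n : ℝ)] with x hx
    have hinf' : {i | (ν i : ℝ) ≤ x}.Infinite :=
      Set.Infinite.mono (fun i hi => (Nat.cast_le.mpr hi).trans hx) hinf
    simp [hinf'.ncard]
  have hrpow : (fun x : ℝ => x ^ θ) =o[atTop] fun x => x := by
    rw [isLittleO_iff_tendsto' ((eventually_gt_atTop 0).mono fun x hx h => absurd h hx.ne')]
    refine (tendsto_rpow_neg_atTop (sub_pos.mpr hθ)).congr' ?_
    filter_upwards [eventually_gt_atTop 0] with x hx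
    rw [neg_sub, Real.rpow_sub_one hx.ne']
  have hlin := (hcount.congr' hcount_eq .rfl).trans_isLittleO hrpow
  rw [isLittleO_const_mul_left_iff (neg_ne_zero.mpr hκ)] at hlin
  exact isLittleO_irrefl ((eventually_ne_atTop 0).frequently) hlin

theorem sum_normSum_one_sub_isBigO [Northcott ν] {κ θ : ℝ} (hν : ∀ i, 0 < ν i) (hθ : 0 ≤ θ)
    (hcount : (fun x : ℝ => ({i | (ν i : ℝ) ≤ x}.ncard : ℝ) - κ * x) =O[atTop] fun x => x ^ θ) :
    (fun t => ∑ k ∈ Ioc 0 ⌊t⌋₊, normSum ν 1 k - κ * t)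
      =O[𝓟 (Set.Ici 1)] fun t => t ^ θ := by
  have hsum : ∀ t : ℝ, ∑ k ∈ Ioc 0 ⌊t⌋₊, normSum ν 1 k = #(normBall ν ⌊t⌋₊) := fun t => by
    simp [sum_normSum hν]
  simp only [hsum]
  refine isBigO_principal_Ici_of_isBigO_atTop ?_ (fun t ht => Real.one_le_rpow ht hθ) fun X => ?_
  · refine hcount.congr' ?_ .rfl
    filter_upwards [eventually_ge_atTop 0] with x hx
    rw [ncard_norm_le hx]
  · refine isBigO_principal.mpr ⟨#(normBall ν ⌊X⌋₊) + |κ| * X, fun t ⟨ht, htX⟩ => ?_⟩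
    have hball : normBall ν ⌊t⌋₊ ⊆ normBall ν ⌊X⌋₊ := fun i hi =>
      mem_normBall.mpr ((mem_normBall.mp hi).trans (Nat.floor_le_floor htX))
    rw [norm_one, mul_one]
    refine (norm_sub_le _ _).trans ?_
    rw [Real.norm_natCast, norm_mul, Real.norm_eq_abs, Real.norm_of_nonneg (zero_le_one.trans ht)]
    gcongr

theorem summable_rpow_neg_of_sum_sub_isBigO [Northcott ν] {κ θ σ : ℝ} (hν : ∀ i, 0 < ν i)
    (hθ : θ ≤ 1) (hσ : 1 < σ)
    (hcount : (fun t => ∑ k ∈ Ioc 0 ⌊t⌋₊, normSum ν 1 k - κ * t)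
      =O[𝓟 (Set.Ici 1)] fun t => t ^ θ) :
    Summable fun i => (ν i : ℝ) ^ (-σ) := by
  have hbdd := sum_rpow_neg_mul_isBigO_max (hθ.trans_lt hσ) hθ hσ.ne' hcount
  obtain ⟨C, hC⟩ := isBigO_principal.mp hbdd
  have hball : ∀ X : ℕ, 1 ≤ X → ∑ i ∈ normBall ν X, (ν i : ℝ) ^ (-σ) ≤ C := fun X hX => by
    have := hC X (Set.mem_Ici.mpr (Nat.one_le_cast.mpr hX))
    rw [max_eq_right (sub_neg.mpr hσ).le, Real.rpow_zero, norm_one, mul_one, Nat.floor_natCast,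
      sum_mul_normSum hν fun n => (n : ℝ) ^ (-σ)] at this
    simpa using (le_abs_self _).trans this
  refine summable_of_sum_le (c := C) (fun i => by positivity) fun s => ?_
  refine (sum_le_sum_of_subset_of_nonneg (fun i hi => ?_) fun i _ _ => ?_).trans
    (hball (s.sup ν + 1) (Nat.le_add_left ..))
  · exact mem_normBall.mpr ((le_sup hi).trans (Nat.le_succ _))
  · positivity

end CountingFunction

section LogLog

theorem hasDerivAt_inv_log {t : ℝ} (ht : t ≠ 0) (hlog : Real.log t ≠ 0) :
    HasDerivAt (fun t => (Real.log t)⁻¹) (-(t * Real.log t ^ 2)⁻¹) t := by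
  convert! (Real.hasDerivAt_log ht).inv hlog using 1
  rw [mul_inv]
  ring

theorem exists_sum_inv_log_mul_sub_log_log_isBigO {c : ArithmeticFunction ℝ}
    (hc : (fun t => ∑ k ∈ Ioc 0 ⌊t⌋₊, c k - Real.log t) =O[atTop] fun _ => (1 : ℝ)) :
    ∃ l, (fun x => ∑ k ∈ Ioc 0 ⌊x⌋₊, (Real.log k)⁻¹ * c k - Real.log (Real.log x) - l)
      =O[atTop] fun x => 1 / Real.log x := by
  simp only [← sum_Icc_zero_eq_sum_Ioc_zero c] at hc
  obtain ⟨C, hC⟩ := hc.bound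
  obtain ⟨X, hX⟩ := eventually_atTop.mp hC
  set x₀ := max X 2
  have hbound : ∀ t ∈ Set.Ici x₀, |∑ k ∈ Icc 0 ⌊t⌋₊, c k - Real.log t| ≤ C := fun t ht => by
    simpa using hX t ((le_max_left _ _).trans ht)
  have hx₀ : 2 ≤ x₀ := le_max_right _ _
  have hpos : ∀ t ∈ Set.Ici x₀, 0 < t := fun t ht => two_pos.trans_le (hx₀.trans ht)
  have hlog : ∀ t ∈ Set.Ici x₀, 0 < Real.log t := fun t ht =>
    Real.log_pos (one_lt_two.trans_le (hx₀.trans ht))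
  have hderiv : ∀ t ∈ Set.Ici x₀,
      HasDerivAt (fun t => (Real.log t)⁻¹) (-(t * Real.log t ^ 2)⁻¹) t := fun t ht =>
    hasDerivAt_inv_log (hpos t ht).ne' (hlog t ht).ne'
  obtain ⟨l, hl⟩ := exists_forall_abs_sum_mul_sub_antideriv_sub_le (zero_le_two.trans hx₀)
    (H := fun t => C * (Real.log t)⁻¹) (H' := fun t => C * (t * Real.log t ^ 2)⁻¹) hderiv
    (fun t ht => ((continuousAt_id.mul ((Real.continuousAt_log (hpos t ht).ne').pow 2)).inv₀
      (mul_pos (hpos t ht) (pow_pos (hlog t ht) 2)).ne').neg.continuousWithinAt)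
    (fun t ht => Real.hasDerivAt_log (hpos t ht).ne')
    (fun t ht => by
      simpa only [div_eq_inv_mul, mul_comm] using
        (Real.hasDerivAt_log (hpos t ht).ne').log (hlog t ht).ne')
    (fun t ht => by simpa only [mul_neg] using (hderiv t ht).const_mul C)
    (by simpa using Real.tendsto_log_atTop.inv_tendsto_atTop.const_mul C)
    (fun t ht => by
      rw [abs_mul, abs_of_pos (inv_pos.mpr (hlog t ht)), mul_comm]
      exact mul_le_mul_of_nonneg_right (hbound t ht) (inv_pos.mpr (hlog t ht)).le)
    (fun t ht => by
      have := inv_pos.mpr (mul_pos (hpos t ht) (pow_pos (hlog t ht) 2))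
      rw [abs_mul, abs_neg, abs_of_pos this, mul_comm]
      exact mul_le_mul_of_nonneg_right (hbound t ht) this.le)
  refine ⟨l, .of_bound (2 * C) ?_⟩
  filter_upwards [eventually_ge_atTop x₀] with x hx
  rw [one_div, norm_inv, Real.norm_of_nonneg (hlog x hx).le, mul_assoc]
  exact hl x hx

theorem tsum_sub_sum_normBall_isBigO {ι : Type*} {ν : ι → ℕ} [Northcott ν] {g : ι → ℝ}
    (hν : ∀ i, 2 ≤ ν i) (hg : ∀ i, 0 ≤ g i) (hsum : Summable fun i => Real.log (ν i) * g i) :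
    (fun x : ℝ => ∑' i, g i - ∑ i ∈ normBall ν ⌊x⌋₊, g i) =O[atTop] fun x => 1 / Real.log x := by
  have le_of_log_le : ∀ x : ℝ, 1 < x → ∀ i, x ≤ ν i →
      g i ≤ (Real.log x)⁻¹ * (Real.log (ν i) * g i) := fun x hx i hxi => by
    have hlog := Real.log_pos hx
    rw [inv_mul_eq_div, le_div_iff₀ hlog, mul_comm]
    exact mul_le_mul_of_nonneg_right (Real.log_le_log (zero_lt_one.trans hx) hxi) (hg i)
  have hg_sum : Summable g := Summable.of_nonneg_of_le hg
    (fun i => le_of_log_le 2 one_lt_two i (Nat.ofNat_le_cast.mpr (hν i))) (hsum.mul_left _)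
  refine .of_bound (∑' i, Real.log (ν i) * g i) ?_
  filter_upwards [eventually_gt_atTop 1] with x hx
  have hlog := Real.log_pos hx
  rw [← hg_sum.sum_add_tsum_compl (s := normBall ν ⌊x⌋₊), add_sub_cancel_left,
    Real.norm_of_nonneg (tsum_nonneg fun _ : ↥((normBall ν ⌊x⌋₊ : Set ι)ᶜ) => hg _),
    Real.norm_of_nonneg (by positivity)]
  calc ∑' i : ↥((normBall ν ⌊x⌋₊ : Set ι)ᶜ), g i
      ≤ ∑' i : ↥((normBall ν ⌊x⌋₊ : Set ι)ᶜ), (Real.log x)⁻¹ * (Real.log (ν i) * g i) := by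
        refine (hg_sum.subtype _).tsum_le_tsum (fun ⟨i, hi⟩ => le_of_log_le x hx i ?_)
          ((hsum.mul_left _).subtype _)
        rw [coe_normBall_floor (zero_le_one.trans hx.le)] at hi
        exact (not_le.mp (Set.notMem_ofPred_iff.mp hi)).le
    _ ≤ ∑' i, (Real.log x)⁻¹ * (Real.log (ν i) * g i) :=
        (hsum.mul_left _).tsum_subtype_le _ _ fun i => by have := hg i; positivity
    _ = (∑' i, Real.log (ν i) * g i) * (1 / Real.log x) := by
        rw [tsum_mul_left, one_div, mul_comm]

end LogLog

section PrimeSums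

variable {P : Type*} {N : P → ℕ}

theorem sum_pow_succ_le {x : ℝ} (hx : 0 ≤ x) (hx' : x ≤ 1 / 2) (K : ℕ) :
    ∑ k ∈ range K, x ^ (k + 1) ≤ x + 2 * x ^ 2 := by
  have hx1 : x < 1 := by linarith
  have hgeom : ∑ k ∈ range K, x ^ k ≤ (1 - x)⁻¹ :=
    ((summable_geometric_of_lt_one hx hx1).sum_le_tsum _ fun k _ => pow_nonneg hx k).trans_eq
      (tsum_geometric_of_lt_one hx hx1)
  calc ∑ k ∈ range K, x ^ (k + 1) = x * ∑ k ∈ range K, x ^ k := by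
        simp only [mul_sum, pow_succ']
    _ ≤ x * (1 - x)⁻¹ := by gcongr
    _ ≤ x + 2 * x ^ 2 := by
        rw [← div_eq_mul_inv, div_le_iff₀ (by linarith)]
        nlinarith [mul_nonneg (sq_nonneg x) (sub_nonneg.mpr hx')]

theorem normBall_primePowNorm_subset [Northcott N] [Northcott (primePowNorm N)]
    (hN : ∀ p, 2 ≤ N p) (X : ℕ) :
    normBall (primePowNorm N) X ⊆ normBall N X ×ˢ range X := by
  rintro ⟨p, k⟩ h
  have hpow : primePowNorm N (p, k) ≤ X := mem_normBall.mp h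
  rw [mem_product, mem_normBall, mem_range]
  exact ⟨(Nat.le_self_pow k.succ_ne_zero _).trans hpow,
    (k.lt_succ_self.trans (Nat.lt_pow_self (hN p))).trans_le hpow⟩

theorem map_normBall_subset_primePowNorm [Northcott N] [Northcott (primePowNorm N)] (X : ℕ) :
    (normBall N X).map (.sectL P 0) ⊆ normBall (primePowNorm N) X := by
  intro q hq
  obtain ⟨p, hp, rfl⟩ := mem_map.mp hq
  simpa [primePowNorm] using hp

theorem abs_sum_primePow_sub_sum_prime_le [Northcott N] [Northcott (primePowNorm N)]
    (hN : ∀ p, 2 ≤ N p) (hsum : Summable fun p => Real.log (N p) / (N p : ℝ) ^ 2) (X : ℕ) :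
    |∑ q ∈ normBall (primePowNorm N) X, Real.log (N q.1) / primePowNorm N q -
        ∑ p ∈ normBall N X, Real.log (N p) / N p| ≤
      2 * ∑' p, Real.log (N p) / (N p : ℝ) ^ 2 := by
  have lower : ∑ p ∈ normBall N X, Real.log (N p) / N p ≤
      ∑ q ∈ normBall (primePowNorm N) X, Real.log (N q.1) / primePowNorm N q :=
    calc _ = ∑ q ∈ (normBall N X).map (.sectL P 0), Real.log (N q.1) / primePowNorm N q := by
          simp [primePowNorm]
      _ ≤ _ := sum_le_sum_of_subset_of_nonneg (map_normBall_subset_primePowNorm X)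
          fun q _ _ => by positivity
  have upper : ∑ q ∈ normBall (primePowNorm N) X, Real.log (N q.1) / primePowNorm N q ≤
      ∑ p ∈ normBall N X, Real.log (N p) / N p +
        2 * ∑ p ∈ normBall N X, Real.log (N p) / (N p : ℝ) ^ 2 :=
    calc _ ≤ ∑ q ∈ normBall N X ×ˢ range X, Real.log (N q.1) / primePowNorm N q :=
          sum_le_sum_of_subset_of_nonneg (normBall_primePowNorm_subset hN X)
            fun q _ _ => by positivity
      _ = ∑ p ∈ normBall N X, Real.log (N p) * ∑ k ∈ range X, ((N p : ℝ)⁻¹) ^ (k + 1) := by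
          simp [sum_product, primePowNorm, mul_sum, div_eq_mul_inv]
      _ ≤ ∑ p ∈ normBall N X, Real.log (N p) * ((N p : ℝ)⁻¹ + 2 * (N p : ℝ)⁻¹ ^ 2) := by
          gcongr with p
          refine sum_pow_succ_le (by positivity) ?_ X
          rw [one_div]
          exact inv_anti₀ two_pos (Nat.ofNat_le_cast.mpr (hN p))
      _ = _ := by
          rw [mul_sum, ← sum_add_distrib]
          exact sum_congr rfl fun p _ => by ring
  have tail := hsum.sum_le_tsum (normBall N X) fun p _ => by positivity
  rw [abs_of_nonneg (sub_nonneg.mpr lower)]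
  linarith

theorem normSum_Nm_one_apply_one [Northcott (Nm N)] (hN : ∀ p, 2 ≤ N p) :
    normSum (Nm N) 1 1 = 1 := by
  have hfiber : {m ∈ normBall (Nm N) 1 | Nm N m = 1} = {0} := by
    ext m
    rw [mem_fiber_iff, Nm_eq_one_iff hN, mem_singleton]
  rw [normSum_apply one_ne_zero, hfiber, sum_singleton, Pi.one_apply]

theorem summable_log_div_sq_of_sum_sub_isBigO [Northcott (Nm N)] {κ θ : ℝ}
    (hN : ∀ p, 0 < N p) (hθ : θ ≤ 1)
    (hcount : (fun t => ∑ k ∈ Ioc 0 ⌊t⌋₊, normSum (Nm N) 1 k - κ * t)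
      =O[𝓟 (Set.Ici 1)] fun t => t ^ θ) :
    Summable fun p => Real.log (N p) / (N p : ℝ) ^ 2 := by
  have hsum : Summable fun m => (Nm N m : ℝ) ^ (-(3 / 2) : ℝ) :=
    summable_rpow_neg_of_sum_sub_isBigO (Nm_pos hN) hθ (by norm_num) hcount
  have hprime : Summable fun p => (N p : ℝ) ^ (-(3 / 2) : ℝ) := by
    simpa [Function.comp_def, Nm_single] using
      hsum.comp_injective (Finsupp.single_left_injective (one_ne_zero (α := ℕ)))
  refine Summable.of_nonneg_of_le (fun p => by positivity) (fun p => ?_) (hprime.mul_left 2)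
  have hNp : (0 : ℝ) < N p := Nat.cast_pos.mpr (hN p)
  have hlog : Real.log (N p) ≤ 2 * (N p : ℝ) ^ (1 / 2 : ℝ) :=
    (Real.log_le_rpow_div hNp.le one_half_pos).trans_eq (by ring)
  rw [div_le_iff₀ (by positivity), mul_assoc, ← Real.rpow_natCast, ← Real.rpow_add hNp]
  exact hlog.trans_eq (by norm_num)

theorem sum_log_div_sub_log_isBigO_one [Northcott (Nm N)] [Northcott N] {κ θ : ℝ}
    (hN : ∀ p, 2 ≤ N p) (hκ : κ ≠ 0) (hθ : θ < 1)
    (hcount : (fun t => ∑ k ∈ Ioc 0 ⌊t⌋₊, normSum (Nm N) 1 k - κ * t)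
      =O[𝓟 (Set.Ici 1)] fun t => t ^ θ) :
    (fun x : ℝ => ∑ p ∈ normBall N ⌊x⌋₊, Real.log (N p) / N p - Real.log x)
      =O[𝓟 (Set.Ici 1)] fun _ => (1 : ℝ) := by
  have hN0 : ∀ p, 0 < N p := fun p => two_pos.trans_le (hN p)
  have : Northcott (primePowNorm N) := northcott_primePowNorm
  have hprimePow := sum_div_sub_log_isBigO_one
    (L := normSum (primePowNorm N) fun q => Real.log (N q.1)) hκ hθ
    (normSum_Nm_one_apply_one hN) (normSum_nonneg fun q => Real.log_natCast_nonneg (N q.1))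
    (normSum_one_pmul_log hN0) hcount
  have hdiff : (fun x : ℝ => ∑ q ∈ normBall (primePowNorm N) ⌊x⌋₊,
      Real.log (N q.1) / primePowNorm N q - ∑ p ∈ normBall N ⌊x⌋₊, Real.log (N p) / N p)
      =O[𝓟 (Set.Ici 1)] fun _ => (1 : ℝ) :=
    isBigO_principal.mpr ⟨2 * ∑' p, Real.log (N p) / (N p : ℝ) ^ 2, fun x _ => by
      rw [norm_one, mul_one]
      exact abs_sum_primePow_sub_sum_prime_le hN
        (summable_log_div_sq_of_sum_sub_isBigO hN0 hθ.le hcount) _⟩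
  refine (hprimePow.sub hdiff).congr_left fun x => ?_
  simp only [div_eq_inv_mul]
  rw [sum_mul_normSum (ν := primePowNorm N) (fun q => pow_pos (hN0 q.1) _) fun n => (n : ℝ)⁻¹]
  ring

theorem exists_sum_one_div_sub_log_log_isBigO [Northcott N] (hN : ∀ p, 2 ≤ N p)
    (hlog : (fun x : ℝ => ∑ p ∈ normBall N ⌊x⌋₊, Real.log (N p) / N p - Real.log x)
      =O[atTop] fun _ => (1 : ℝ)) :
    ∃ l, (fun x : ℝ => ∑ p ∈ normBall N ⌊x⌋₊, 1 / (N p : ℝ) - Real.log (Real.log x) - l)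
      =O[atTop] fun x => 1 / Real.log x := by
  have hN0 : ∀ p, 0 < N p := fun p => two_pos.trans_le (hN p)
  simp only [← sum_normSum hN0] at hlog
  obtain ⟨l, hl⟩ := exists_sum_inv_log_mul_sub_log_log_isBigO hlog
  refine ⟨l, hl.congr_left fun x => ?_⟩
  rw [sum_mul_normSum hN0 fun n => (Real.log n)⁻¹]
  congr 2
  refine sum_congr rfl fun p _ => ?_
  have : Real.log (N p) ≠ 0 := (Real.log_pos (Nat.one_lt_cast.mpr (hN p))).ne'
  field_simp

end PrimeSums

section LocalFactor

theorem sum_Icc_pow_succ_sub_pow_div_pow {K : Type*} [Field K] {x : K} (hx : x ≠ 0) (j : ℕ) :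
    ∑ k ∈ Icc 1 j, (x ^ (j + 1) - x ^ j) / x ^ k = x ^ j - 1 := by
  induction j with
  | zero => simp
  | succ j ih =>
    have hscale : ∑ k ∈ Icc 1 j, (x ^ (j + 1 + 1) - x ^ (j + 1)) / x ^ k = x * (x ^ j - 1) := by
      rw [← ih, mul_sum]
      exact sum_congr rfl fun k _ => by ring
    rw [sum_Icc_succ_top (by lia), hscale]
    field_simp
    ring

theorem sum_localFactor_eq {K : Type*} [Field K] {x : K} {h : ℕ} (hx : x ≠ 0) (hxh : x ^ h ≠ 1) :
    ∑ k ∈ Icc 1 (h - 1), (x ^ h - x ^ (h - 1)) / (x ^ k * (x ^ h - 1)) =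
      1 / x - (x - 1) / (x * (x ^ h - 1)) := by
  obtain _ | j := h
  · exact absurd (pow_zero x) hxh
  have hden : x ^ (j + 1) - 1 ≠ 0 := sub_ne_zero.mpr hxh
  simp only [← div_div, ← sum_div]
  rw [Nat.add_sub_cancel, sum_Icc_pow_succ_sub_pow_div_pow hx]
  field_simp
  ring

theorem sub_one_div_mul_pow_sub_one_mem_Icc {x : ℝ} {h : ℕ} (hx : 1 < x) (hh : 2 ≤ h) :
    (x - 1) / (x * (x ^ h - 1)) ∈ Set.Icc 0 (1 / x ^ 2) := by
  have hx0 : 0 < x := zero_lt_one.trans hx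
  have hpow : x ^ 2 ≤ x ^ h := pow_le_pow_right₀ hx.le hh
  have hden : 0 < x ^ h - 1 := sub_pos.mpr (one_lt_pow₀ hx (by lia))
  refine ⟨div_nonneg (sub_nonneg.mpr hx.le) (by positivity), ?_⟩
  rw [div_le_div_iff₀ (by positivity) (by positivity)]
  nlinarith [mul_le_mul_of_nonneg_left hpow hx0.le]

end LocalFactor

section StarCond

variable {P : Type*} {N : P → ℕ} {κ θ A : ℝ}

theorem StarCond.northcott_Nm (hstar : StarCond N κ θ) : Northcott (Nm N) :=
  northcott_of_ncard_sub_isBigO hstar.1.ne' hstar.2.2.1 hstar.2.2.2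

theorem StarCond.northcott (hstar : StarCond N κ θ) : Northcott N :=
  have := hstar.northcott_Nm
  northcott_of_northcott_Nm

theorem StarCond.sum_normSum_sub_isBigO [Northcott (Nm N)] (hstar : StarCond N κ θ)
    (hN : ∀ p, 0 < N p) :
    (fun t => ∑ k ∈ Ioc 0 ⌊t⌋₊, normSum (Nm N) 1 k - κ * t)
      =O[𝓟 (Set.Ici 1)] fun t => t ^ θ :=
  sum_normSum_one_sub_isBigO (Nm_pos hN) hstar.2.1 hstar.2.2.2

theorem StarCond.summable_log_div_sq (hstar : StarCond N κ θ) (hN : ∀ p, 0 < N p) :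
    Summable fun p => Real.log (N p) / (N p : ℝ) ^ 2 :=
  have := hstar.northcott_Nm
  summable_log_div_sq_of_sum_sub_isBigO hN hstar.2.2.1.le (hstar.sum_normSum_sub_isBigO hN)

theorem IsMertens.sum_one_div_sub_isBigO [Northcott N] (hA : IsMertens N A)
    (hstar : StarCond N κ θ) (hN : ∀ p, 2 ≤ N p) :
    (fun x : ℝ => ∑ p ∈ normBall N ⌊x⌋₊, 1 / (N p : ℝ) - Real.log (Real.log x) - A)
      =O[atTop] fun x => 1 / Real.log x := by
  have := hstar.northcott_Nm
  have hcount := hstar.sum_normSum_sub_isBigO fun p => two_pos.trans_le (hN p)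
  have hfirst := sum_log_div_sub_log_isBigO_one hN hstar.1.ne' hstar.2.2.1 hcount
  obtain ⟨l, hl⟩ := exists_sum_one_div_sub_log_log_isBigO hN
    (hfirst.mono (le_principal_iff.mpr (Ici_mem_atTop 1)))
  have hlim : Tendsto (fun x : ℝ =>
      ∑ p ∈ normBall N ⌊x⌋₊, 1 / (N p : ℝ) - Real.log (Real.log x)) atTop (𝓝 l) := by
    simpa using (hl.trans_tendsto (Real.tendsto_log_atTop.const_div_atTop 1)).add_const l
  have hlim' : Tendsto (fun x : ℝ =>
      ∑ p ∈ normBall N ⌊x⌋₊, 1 / (N p : ℝ) - Real.log (Real.log x)) atTop (𝓝 A) :=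
    hA.congr' ((eventually_ge_atTop 0).mono fun x hx =>
      congrArg (· - Real.log (Real.log x)) (finsum_mem_norm_le hx _))
  rwa [tendsto_nhds_unique hlim hlim'] at hl

end StarCond

end

/-- Mertens-type estimate for the weighted prime sum arising in the `h`-free
first moment. -/
theorem hfree_prime_sum {P : Type*} [Countable P] (N : P → ℕ)
    (hN : ∀ p, 2 ≤ N p) (κ θ : ℝ) (hstar : StarCond N κ θ)
    (A : ℝ) (hA : IsMertens N A) (h : ℕ) (hh : 2 ≤ h) :
    (fun x : ℝ =>
        (∑ᶠ p ∈ {p : P | (N p : ℝ) ≤ x},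
            ∑ k ∈ Finset.Icc 1 (h - 1),
              ((N p : ℝ) ^ h - (N p : ℝ) ^ (h - 1)) /
                ((N p : ℝ) ^ k * ((N p : ℝ) ^ h - 1)))
          - Real.log (Real.log x) - C1const N h A)
      =O[atTop] fun x : ℝ => 1 / Real.log x := by
  have := hstar.northcott
  have hN1 : ∀ p, (1 : ℝ) < N p := fun p => Nat.one_lt_cast.mpr (hN p)
  have hN0 : ∀ p, 0 < N p := fun p => two_pos.trans_le (hN p)
  have hlocal := fun p => sub_one_div_mul_pow_sub_one_mem_Icc (hN1 p) hh
  have hsummable : Summable fun p =>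
      Real.log (N p) * (((N p : ℝ) - 1) / ((N p : ℝ) * ((N p : ℝ) ^ h - 1))) := by
    have hlog : ∀ p, 0 ≤ Real.log (N p) := fun p => Real.log_natCast_nonneg _
    refine .of_nonneg_of_le (fun p => mul_nonneg (hlog p) (hlocal p).1) (fun p => ?_)
      (hstar.summable_log_div_sq hN0)
    exact (mul_le_mul_of_nonneg_left (hlocal p).2 (hlog p)).trans_eq (mul_one_div _ _)
  have hmertens := hA.sum_one_div_sub_isBigO hstar hN
  have htail := tsum_sub_sum_normBall_isBigO hN (fun p => (hlocal p).1) hsummable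
  refine (hmertens.add htail).congr' ((eventually_ge_atTop 0).mono fun x hx => ?_) .rfl
  beta_reduce
  rw [finsum_mem_norm_le hx, Finset.sum_congr rfl fun p _ => sum_localFactor_eq
    (zero_lt_one.trans (hN1 p)).ne' (one_lt_pow₀ (hN1 p) (by lia)).ne',
    Finset.sum_sub_distrib, C1const]
  ring
end
end

section
/- Under Condition (★), for every integer h ≥ 2 and every real s > 1/h, the series ∑_{m ∈ M, m h-full} N(m)^{−s} converges, the infinite product ∏_p (1 + N(p)^{−hs}/(1 − N(p)^{−s})) over prime elements p converges, and the two are equal. -/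
open Filter Topology Asymptotics
open scoped Classical

noncomputable section

/-!
A product of nonnegative series indexed by the primes, each with constant term `1`, expands into a
sum over finitely supported choices of exponents: every finite set of such choices lies in a finite
box, over which the sum factors. Allowing only the exponents `0` and `k ≥ h` at every prime
gives the `h`-full elements, with local factor `1 + q ^ h / (1 - q)` at `q = N(p) ^ (-s)`. As `q`
tends to `0` along the primes, the product converges as soon as `∑ N(p) ^ (-h * s)` does. Condition
(★) makes the number of elements of norm at most `x` grow linearly, so partial summation gives
`∑ N(m) ^ (-σ) < ∞` for `σ > 1`; restricting to the primes and taking `σ = h * s` suffices.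
-/

section EulerProduct

variable {ι α : Type*} [Zero α]

theorem sum_finsupp_prod_eq_prod_sum {R : Type*} [CommSemiring R] {g : ι → α → R}
    (hg0 : ∀ i, g i 0 = 1) (S : Finset ι) (t : ι → Finset α) :
    ∑ m ∈ S.finsupp t, m.prod g = ∏ i ∈ S, ∑ a ∈ t i, g i a := by
  have prod_indicator (x : ∀ i ∈ S, α) :
      (Finsupp.indicator S x).prod g = ∏ i ∈ S.attach, g i (x i i.2) := by
    rw [Finsupp.prod_of_support_subset _ (Finsupp.support_indicator_subset S x) _
      fun i _ => hg0 i, ← Finset.prod_attach]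
    exact Finset.prod_congr rfl fun i _ => by rw [Finsupp.indicator_of_mem i.2]
  rw [Finset.finsupp, Finset.sum_map, Finset.prod_sum]
  exact Finset.sum_congr (by congr!) fun x _ => prod_indicator x

theorem subset_finsupp_biUnion_support_image (T : Finset (ι →₀ α)) :
    T ⊆ (T.biUnion Finsupp.support).finsupp fun i => T.image fun m => m i := fun _m hm =>
  Finset.mem_finsupp_iff.2
    ⟨Finset.subset_biUnion_of_mem Finsupp.support hm, fun _ _ => Finset.mem_image_of_mem _ hm⟩

theorem hasSum_finsupp_prod {g : ι → α → ℝ} {F : ι → ℝ} {A : ℝ} (hg0 : ∀ i, g i 0 = 1)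
    (hg : ∀ i a, 0 ≤ g i a) (hF : ∀ i, HasSum (g i) (F i)) (hA : HasProd F A) :
    HasSum (fun m : ι →₀ α => m.prod g) A := by
  have prod_nonneg (m : ι →₀ α) : 0 ≤ m.prod g := Finset.prod_nonneg fun i _ => hg i _
  have one_le (i : ι) : 1 ≤ F i := hg0 i ▸ le_hasSum (hF i) 0 fun a _ => hg i a
  refine hasSum_of_isLUB_of_nonneg A prod_nonneg ⟨?_, fun b hb => ?_⟩
  · rintro _ ⟨T, rfl⟩
    let S := T.biUnion Finsupp.support
    let t (i : ι) := T.image fun m => m i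
    calc ∑ m ∈ T, m.prod g
        ≤ ∑ m ∈ S.finsupp t, m.prod g :=
          Finset.sum_le_sum_of_subset_of_nonneg (subset_finsupp_biUnion_support_image T)
            fun m _ _ => prod_nonneg m
      _ = ∏ i ∈ S, ∑ a ∈ t i, g i a := sum_finsupp_prod_eq_prod_sum hg0 S t
      _ ≤ ∏ i ∈ S, F i :=
          Finset.prod_le_prod (fun i _ => Finset.sum_nonneg fun a _ => hg i a)
            fun i _ => sum_le_hasSum _ (fun a _ => hg i a) (hF i)
      _ ≤ A := (Finset.prod_mono_set_of_one_le one_le).ge_of_tendsto hA S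
  · refine le_of_tendsto' hA fun S => ?_
    have box_le (t : Finset α) : ∏ i ∈ S, ∑ a ∈ t, g i a ≤ b :=
      sum_finsupp_prod_eq_prod_sum hg0 S (fun _ => t) ▸ hb ⟨S.finsupp fun _ => t, rfl⟩
    exact le_of_tendsto' (tendsto_finsetProd S fun i _ => hF i) box_le

theorem finsupp_prod_indicator {R : Type*} [CommMonoidWithZero R] {K : Set α} (hK : 0 ∈ K)
    (g : ι → α → R) (m : ι →₀ α) :
    m.prod (fun i => K.indicator (g i)) =
      {m : ι →₀ α | ∀ i, m i ∈ K}.indicator (fun m => m.prod g) m := by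
  by_cases hm : m ∈ {m : ι →₀ α | ∀ i, m i ∈ K}
  · rw [Set.indicator_of_mem hm]
    exact Finset.prod_congr rfl fun i _ => Set.indicator_of_mem (hm i) _
  · rw [Set.indicator_of_notMem hm]
    obtain ⟨i, hi⟩ := not_forall.1 hm
    have mem_support : i ∈ m.support :=
      Finsupp.mem_support_iff.2 fun h0 => hi (by rwa [h0])
    exact Finset.prod_eq_zero mem_support (Set.indicator_of_notMem hi _)

theorem hasSum_finsupp_prod_subtype {K : Set α} (hK : 0 ∈ K) {g : ι → α → ℝ} {F : ι → ℝ} {A : ℝ}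
    (hg0 : ∀ i, g i 0 = 1) (hg : ∀ i, ∀ a ∈ K, 0 ≤ g i a)
    (hF : ∀ i, HasSum (fun a : K => g i a) (F i)) (hA : HasProd F A) :
    HasSum (fun m : {m : ι →₀ α | ∀ i, m i ∈ K} => m.1.prod g) A := by
  have hasSum_indicator := hasSum_finsupp_prod (g := fun i => K.indicator (g i))
    (fun i => by rw [Set.indicator_of_mem hK, hg0])
    (fun i => Set.indicator_nonneg (hg i))
    (fun i => hasSum_subtype_iff_indicator.1 (hF i)) hA
  simp only [finsupp_prod_indicator hK] at hasSum_indicator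
  exact hasSum_subtype_iff_indicator.2 hasSum_indicator

end EulerProduct

section Counting

theorem sum_ncard_fiber_le_ncard {α : Type*} {N : α → ℕ} {n : ℕ} (hfin : {a | N a ≤ n}.Finite) :
    ∑ k ∈ Finset.Icc 1 n, (N ⁻¹' {k}).ncard ≤ {a | N a ≤ n}.ncard := by
  have fiber_eq (k : ℕ) (hk : k ∈ Finset.Icc 1 n) :
      (N ⁻¹' {k}).ncard = {a ∈ hfin.toFinset | N a = k}.card := by
    rw [← Set.ncard_coe_finset]
    congr 1
    ext a
    simpa using fun hak : N a = k => hak ▸ (Finset.mem_Icc.1 hk).2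
  rw [Finset.sum_congr rfl fiber_eq, Finset.sum_card_fiberwise_eq_card_filter,
    Set.ncard_eq_toFinset_card _ hfin]
  exact Finset.card_filter_le _ _

theorem summable_rpow_neg_of_ncard_isBigO {α : Type*} {N : α → ℕ} {r σ : ℝ}
    (hfin : ∀ n, {a | N a ≤ n}.Finite)
    (hO : (fun n : ℕ => ({a | N a ≤ n}.ncard : ℝ)) =O[atTop] fun n : ℕ => (n : ℝ) ^ r)
    (hr : 0 ≤ r) (hσ : r < σ) : Summable fun a => (N a : ℝ) ^ (-σ) := by
  have fiber_finite (n : ℕ) : Finite (N ⁻¹' {n}) :=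
    (hfin n).subset fun a ha => le_of_eq ha
  have partial_sums_isBigO :
      (fun n => ∑ k ∈ Finset.Icc 1 n, ((N ⁻¹' {k}).ncard : ℝ)) =O[atTop]
        fun n : ℕ => (n : ℝ) ^ r := by
    refine (isBigO_of_le _ fun n => ?_).trans hO
    rw [← Nat.cast_sum, Real.norm_natCast, Real.norm_natCast]
    exact_mod_cast sum_ncard_fiber_le_ncard (hfin n)
  have lseries_summable := LSeriesSummable_of_sum_norm_bigO_and_nonneg (s := σ)
    partial_sums_isBigO (fun _ => Nat.cast_nonneg _) hr hσ
  refine (summable_partition (s := fun n => N ⁻¹' {n}) (fun a => by positivity)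
    fun a => ⟨N a, rfl, fun _ h => h.symm⟩).2 ⟨fun n => Summable.of_finite, ?_⟩
  refine lseries_summable.norm.congr fun n => ?_
  have fiber_tsum : ∑' a : N ⁻¹' {n}, (N a : ℝ) ^ (-σ) = (N ⁻¹' {n}).ncard * (n : ℝ) ^ (-σ) := by
    have const (a : N ⁻¹' {n}) : (N a : ℝ) ^ (-σ) = (n : ℝ) ^ (-σ) := by rw [a.2]
    rw [tsum_congr const, tsum_const, nsmul_eq_mul, Nat.card_coe_set_eq]
  rw [fiber_tsum, LSeries.norm_term_eq]
  split_ifs with hn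
  · -- Elements with `N a = 0` contribute nothing, since `0 ^ (-σ) = 0`.
    rw [hn, Nat.cast_zero, Real.zero_rpow (by linarith), mul_zero]
  · simp [Real.rpow_neg, div_eq_mul_inv]

theorem isLittleO_rpow_rpow_atTop {a b : ℝ} (hab : a < b) :
    (fun x : ℝ => x ^ a) =o[atTop] fun x : ℝ => x ^ b := by
  have tendsto_quotient : Tendsto (fun x : ℝ => x ^ (a - b)) atTop (𝓝 0) := by
    simpa only [neg_sub] using tendsto_rpow_neg_atTop (sub_pos.2 hab)
  refine (isLittleO_iff_tendsto' ?_).2 (tendsto_quotient.congr' ?_)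
  · filter_upwards [eventually_gt_atTop 0] with x hx h0
    exact absurd h0 (Real.rpow_pos_of_pos hx b).ne'
  · filter_upwards [eventually_gt_atTop 0] with x hx using Real.rpow_sub hx a b

end Counting

namespace StarCond

variable {P : Type*} {N : P → ℕ} {κ θ : ℝ}

theorem isEquivalent_ncard (hstar : StarCond N κ θ) :
    (fun x : ℝ => ({m : P →₀ ℕ | (Nm N m : ℝ) ≤ x}.ncard : ℝ)) ~[atTop] fun x => κ * x := by
  obtain ⟨hκ, -, hθ, hO⟩ := hstar
  have rpow_isLittleO : (fun x : ℝ => x ^ θ) =o[atTop] fun x : ℝ => x := by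
    simpa only [Real.rpow_one] using isLittleO_rpow_rpow_atTop hθ
  exact hO.trans_isLittleO (rpow_isLittleO.const_mul_right hκ.ne')

theorem finite_Nm_le (hstar : StarCond N κ θ) (x : ℝ) :
    {m : P →₀ ℕ | (Nm N m : ℝ) ≤ x}.Finite := by
  have ncard_tendsto : Tendsto (fun y : ℝ => ({m : P →₀ ℕ | (Nm N m : ℝ) ≤ y}.ncard : ℝ))
      atTop atTop :=
    hstar.isEquivalent_ncard.symm.tendsto_atTop (tendsto_id.const_mul_atTop hstar.1)
  -- `Set.ncard` of an infinite set is `0`, so a positive count forces finiteness.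
  obtain ⟨y, ncard_pos, hxy⟩ :=
    ((ncard_tendsto.eventually_gt_atTop 0).and (eventually_ge_atTop x)).exists
  exact (Set.finite_of_ncard_pos (Nat.cast_pos.1 ncard_pos)).subset fun m hm => le_trans hm hxy

theorem summable_Nm_rpow_neg (hstar : StarCond N κ θ) {σ : ℝ} (hσ : 1 < σ) :
    Summable fun m : P →₀ ℕ => (Nm N m : ℝ) ^ (-σ) := by
  have ncard_isBigO : (fun x : ℝ => ({m : P →₀ ℕ | (Nm N m : ℝ) ≤ x}.ncard : ℝ)) =O[atTop]
      fun x => x :=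
    hstar.isEquivalent_ncard.isBigO.trans (isBigO_const_mul_self κ _ _)
  refine summable_rpow_neg_of_ncard_isBigO (r := 1) (fun n => ?_) ?_ zero_le_one hσ
  · exact_mod_cast hstar.finite_Nm_le n
  · simpa [Function.comp_def] using ncard_isBigO.comp_tendsto tendsto_natCast_atTop_atTop

theorem summable_rpow_neg (hstar : StarCond N κ θ) {σ : ℝ} (hσ : 1 < σ) :
    Summable fun p => (N p : ℝ) ^ (-σ) := by
  have Nm_single (p : P) : Nm N (Finsupp.single p 1) = N p := by simp [Nm]
  simpa only [Function.comp_def, Nm_single] using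
    (hstar.summable_Nm_rpow_neg hσ).comp_injective (Finsupp.single_left_injective one_ne_zero)

end StarCond

section HFull

variable {P : Type*}

theorem hasSum_pow_eq_zero_or_ge {q : ℝ} (hq0 : 0 ≤ q) (hq1 : q < 1) {h : ℕ} (hh : h ≠ 0) :
    HasSum (fun k : {k : ℕ | k = 0 ∨ h ≤ k} => q ^ (k : ℕ)) (1 + q ^ h / (1 - q)) := by
  have hasSum_zero : HasSum (fun k : ({0} : Set ℕ) => q ^ (k : ℕ)) 1 := by
    simpa using hasSum_unique fun k : ({0} : Set ℕ) => q ^ (k : ℕ)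
  have hasSum_tail : HasSum (fun k : Set.range (· + h) => q ^ (k : ℕ)) (q ^ h / (1 - q)) := by
    rw [(add_left_injective h).hasSum_range_iff (f := fun k => q ^ k)]
    simpa only [Function.comp_def, pow_add, div_eq_inv_mul] using
      (hasSum_geometric_of_lt_one hq0 hq1).mul_right (q ^ h)
  have disjoint : Disjoint {0} (Set.range (· + h)) := by
    simp [hh]
  have union_eq : {k : ℕ | k = 0 ∨ h ≤ k} = {0} ∪ Set.range (· + h) := by
    ext k
    simp [le_iff_exists_add', eq_comm]
  rw [union_eq]
  exact hasSum_zero.add_disjoint disjoint hasSum_tail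

theorem summable_pow_div_one_sub {ι : Type*} {q : ι → ℝ} (hq : ∀ i, 0 ≤ q i) {h : ℕ}
    (hsum : Summable fun i => q i ^ h) : Summable fun i => q i ^ h / (1 - q i) := by
  have eventually_small : ∀ᶠ i in cofinite, q i ^ h < (1 / 2) ^ h :=
    hsum.tendsto_cofinite_zero.eventually_lt_const (by positivity)
  refine (hsum.mul_left 2).of_norm_bounded_eventually ?_
  filter_upwards [eventually_small] with i hi
  have lt_half : q i < 1 / 2 := lt_of_pow_lt_pow_left₀ h (by norm_num) hi
  have hpow : 0 ≤ q i ^ h := pow_nonneg (hq i) h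
  rw [Real.norm_of_nonneg (div_nonneg hpow (by linarith)), div_le_iff₀ (by linarith)]
  nlinarith

theorem hasSum_hFull_prod_pow {q : P → ℝ} (hq0 : ∀ p, 0 ≤ q p) (hq1 : ∀ p, q p < 1) {h : ℕ}
    (hh : h ≠ 0) {A : ℝ} (hA : HasProd (fun p => 1 + q p ^ h / (1 - q p)) A) :
    HasSum (fun m : {m : P →₀ ℕ // HFull h m} => m.1.prod fun p k => q p ^ k) A :=
  hasSum_finsupp_prod_subtype (K := {k | k = 0 ∨ h ≤ k}) (Or.inl rfl) (fun p => pow_zero (q p))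
    (fun p k _ => pow_nonneg (hq0 p) k)
    (fun p => hasSum_pow_eq_zero_or_ge (hq0 p) (hq1 p) hh) hA

theorem one_div_Nm_rpow (N : P → ℕ) (s : ℝ) (m : P →₀ ℕ) :
    1 / (Nm N m : ℝ) ^ s = m.prod fun p k => ((N p : ℝ) ^ (-s)) ^ k := by
  rw [one_div, ← Real.rpow_neg (Nat.cast_nonneg _), Nm, Finsupp.prod, Nat.cast_prod,
    ← Real.finsetProd_rpow _ _ fun p _ => Nat.cast_nonneg _]
  refine Finset.prod_congr rfl fun p _ => ?_
  rw [Nat.cast_pow, ← Real.rpow_pow_comm (Nat.cast_nonneg _)]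

theorem hfull_euler_product_general (N : P → ℕ) (hN : ∀ p, 2 ≤ N p) {h : ℕ} (hh : h ≠ 0) {s : ℝ}
    (hs : 0 < s) (hsum : Summable fun p => (N p : ℝ) ^ (-((h : ℝ) * s))) :
    Summable (fun m : {m : P →₀ ℕ // HFull h m} => 1 / (Nm N m.val : ℝ) ^ s) ∧
    Multipliable (fun p : P =>
      1 + (N p : ℝ) ^ (-((h : ℝ) * s)) / (1 - (N p : ℝ) ^ (-s))) ∧
    (∑' m : {m : P →₀ ℕ // HFull h m}, 1 / (Nm N m.val : ℝ) ^ s)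
      = ∏' p : P, (1 + (N p : ℝ) ^ (-((h : ℝ) * s)) / (1 - (N p : ℝ) ^ (-s))) := by
  have rpow_lt_one (p : P) : (N p : ℝ) ^ (-s) < 1 :=
    Real.rpow_lt_one_of_one_lt_of_neg (by exact_mod_cast hN p) (neg_lt_zero.2 hs)
  have rpow_eq_pow (p : P) : (N p : ℝ) ^ (-((h : ℝ) * s)) = ((N p : ℝ) ^ (-s)) ^ h := by
    rw [← Real.rpow_mul_natCast (Nat.cast_nonneg _), neg_mul, mul_comm s]
  simp only [rpow_eq_pow, one_div_Nm_rpow] at hsum ⊢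
  have hmul : Multipliable fun p => 1 + ((N p : ℝ) ^ (-s)) ^ h / (1 - (N p : ℝ) ^ (-s)) :=
    Real.multipliable_one_add_of_summable
      (summable_pow_div_one_sub (fun p => by positivity) hsum)
  have hasSum_prod :=
    hasSum_hFull_prod_pow (fun p => by positivity) rpow_lt_one hh hmul.hasProd
  exact ⟨hasSum_prod.summable, hmul, hasSum_prod.tsum_eq⟩

end HFull

/-- Euler product for the generating series of `h`-full elements, valid for
`s > 1/h`. -/
theorem hfull_euler_product {P : Type*} [Countable P] (N : P → ℕ)
    (hN : ∀ p, 2 ≤ N p) (κ θ : ℝ) (hstar : StarCond N κ θ)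
    (h : ℕ) (hh : 2 ≤ h) (s : ℝ) (hs : 1 / (h : ℝ) < s) :
    Summable (fun m : {m : P →₀ ℕ // HFull h m} => 1 / (Nm N m.val : ℝ) ^ s) ∧
    Multipliable (fun p : P =>
      1 + (N p : ℝ) ^ (-((h : ℝ) * s)) / (1 - (N p : ℝ) ^ (-s))) ∧
    (∑' m : {m : P →₀ ℕ // HFull h m}, 1 / (Nm N m.val : ℝ) ^ s)
      = ∏' p : P, (1 + (N p : ℝ) ^ (-((h : ℝ) * s)) / (1 - (N p : ℝ) ^ (-s))) := by
  have one_lt_mul : 1 < h * s := (div_lt_iff₀' (by positivity)).1 hs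
  exact hfull_euler_product_general N hN (by omega) (lt_trans (by positivity) hs)
    (hstar.summable_rpow_neg one_lt_mul)
end
end
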